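/- Let f be a nonconstant entire function with hyper-order ρ₂(f) < 1 and let k ≥ 1 be an integer. If f and f^{(k)} share a finite value a CM (i.e., f − a and f^{(k)} − a have the same zeros with the same multiplicities), then f^{(k)} − a = c(f − a) for some nonzero constant c. -/

import Mathlib

open Filter ENNReal

/-- `log⁺ x = log (max 1 x)`. -/
noncomputable def logPlus (x : ℝ) : ℝ := Real.log (max 1 x)

/-- Maximum modulus `M(r, f)` of `f` on the circle `|z| = r`. -/
noncomputable def maxMod (f : ℂ → ℂ) (r : ℝ) : ℝ :=
  sSup ((fun z => ‖f z‖) '' Metric.sphere (0:ℂ) r)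

/-- The hyper-order `ρ₂(f) = limsup_{r→∞} log⁺ log⁺ log⁺ M(r,f) / log r` of an entire
function. -/
noncomputable def hyperOrder (f : ℂ → ℂ) : ℝ≥0∞ :=
  Filter.limsup (fun r : ℝ =>
    ENNReal.ofReal (logPlus (logPlus (logPlus (maxMod f r))) / Real.log r)) Filter.atTop

/-- `g` vanishes at `z` to order exactly `n`. -/
def VanishesToOrder (g : ℂ → ℂ) (z : ℂ) (n : ℕ) : Prop :=
  (∀ m : ℕ, m < n → iteratedDeriv m g z = 0) ∧ iteratedDeriv n g z ≠ 0

/-!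
Put `F = f - a`. Sharing `a` CM means that `F⁽ᵏ⁾ = exp h * F + a` for some entire `h`, and the point
is that `h` is constant.

If `h` is not constant, then at a zero `z₀` of `Re h` that maximizes a weighted `‖h'‖`, the function
`h` is almost affine on a disc about `z₀` of radius `δ`, and the rescaled radius `‖h' z₀‖ * δ` is at
least a power of `r` when `‖z₀‖ = O(r)`. That this power beats the growth of `log log M(r, F)` is
where `ρ₂(f) < 1` enters.

If `a = 0`, then `F` is tiny on the part of the disc where `Re h` is large, since otherwise the
equation would make it grow too fast; by the three circles theorem it is tiny on all of
`‖z‖ ≤ r`, so `F = 0`.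

If `a ≠ 0`, rescaling by `h' z₀` gives `φ⁽ᵏ⁾ = exp η * φ + 1` with `η s ≈ s + const`, and the
growth bound on `F` improves to `‖φ s‖ ≤ exp (O(1 + ‖s‖))`. Far to the right
`φ (s + 2πi) - φ s` is tiny, since otherwise the equation would amplify it, and by the three circles
theorem it stays small far to the left. But there `φ⁽ᵏ⁾ ≈ 1`, so that `φ⁽ᵏ⁻¹⁾` changes by almost
`2πi` over a period.
-/

section

open Metric Set

/-! ### Growth of functions with large iterated derivatives -/

section IteratedDeriv

variable {F : Type*} [NormedAddCommGroup F] [NormedSpace ℂ F] [CompleteSpace F]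
  {φ : ℂ → F} {k : ℕ} {p : ℂ} {ϱ : ℝ}

theorem exists_exp_one_mul_norm_le_of_le_norm_iteratedDeriv (hϱ : 0 < ϱ)
    (hφ : DiffContOnCl ℂ φ (ball p ϱ))
    (hlarge : 3 * k.factorial * ϱ⁻¹ ^ k * ‖φ p‖ ≤ ‖iteratedDeriv k φ p‖) :
    ∃ q ∈ sphere p ϱ, Real.exp 1 * ‖φ p‖ ≤ ‖φ q‖ := by
  by_contra! hsmall
  have hpos : 0 < ‖φ p‖ := by
    obtain ⟨q, hq⟩ := NormedSpace.sphere_nonempty (x := p).2 hϱ.le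
    exact pos_of_mul_pos_right ((norm_nonneg _).trans_lt (hsmall q hq)) (Real.exp_pos 1).le
  have hcauchy := Complex.norm_iteratedDeriv_le_of_forall_mem_sphere_norm_le k hϱ hφ
    fun q hq => (hsmall q hq).le
  have he : Real.exp 1 < 3 := Real.exp_one_lt_three
  refine (hlarge.trans hcauchy).not_gt ?_
  rw [div_eq_mul_inv, ← inv_pow]
  calc k.factorial * (Real.exp 1 * ‖φ p‖) * ϱ⁻¹ ^ k
      = Real.exp 1 * (k.factorial * ϱ⁻¹ ^ k * ‖φ p‖) := by ring
    _ < 3 * (k.factorial * ϱ⁻¹ ^ k * ‖φ p‖) := by gcongr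
    _ = 3 * k.factorial * ϱ⁻¹ ^ k * ‖φ p‖ := by ring

theorem exists_exp_mul_norm_le_of_le_norm_iteratedDeriv (hϱ : 0 < ϱ) (hφ : Differentiable ℂ φ)
    {N : ℕ} (hlarge : ∀ z ∈ closedBall p ϱ, ‖φ p‖ ≤ ‖φ z‖ →
      3 * k.factorial * (N / ϱ) ^ k * ‖φ z‖ ≤ ‖iteratedDeriv k φ z‖) :
    ∃ q ∈ closedBall p ϱ, Real.exp N * ‖φ p‖ ≤ ‖φ q‖ := by
  have hstep : ∀ j ≤ N, ∃ q, dist q p ≤ j * (ϱ / N) ∧ Real.exp j * ‖φ p‖ ≤ ‖φ q‖ := by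
    intro j
    induction j with
    | zero => exact fun _ => ⟨p, by simp, by simp⟩
    | succ j ih =>
      intro hj
      obtain ⟨q, hqp, hq⟩ := ih (by omega)
      have hN : (0 : ℝ) < N := by exact_mod_cast (by omega : 0 < N)
      have hqϱ : dist q p ≤ ϱ := calc
        dist q p ≤ j * (ϱ / N) := hqp
        _ ≤ N * (ϱ / N) := by gcongr; omega
        _ = ϱ := by field_simp
      have hpq : ‖φ p‖ ≤ ‖φ q‖ :=
        (le_mul_of_one_le_left (norm_nonneg _) (Real.one_le_exp j.cast_nonneg)).trans hq
      obtain ⟨q', hq'q, hq'⟩ := exists_exp_one_mul_norm_le_of_le_norm_iteratedDeriv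
        (div_pos hϱ hN) hφ.diffContOnCl (by simpa only [inv_div] using hlarge q hqϱ hpq)
      refine ⟨q', ?_, ?_⟩
      · rw [mem_sphere] at hq'q
        push_cast
        linarith [dist_triangle q' q p]
      · rw [Nat.cast_succ, add_comm, Real.exp_add, mul_assoc]
        exact (mul_le_mul_of_nonneg_left hq (Real.exp_pos 1).le).trans hq'
  obtain ⟨q, hqp, hq⟩ := hstep N le_rfl
  refine ⟨q, hqp.trans ?_, hq⟩
  rw [mul_div_left_comm]
  exact mul_le_of_le_one_right hϱ.le (div_self_le_one _)

end IteratedDeriv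

theorem exists_exp_mul_norm_le_of_iteratedDeriv_eq {φ g e : ℂ → ℂ} (hφ : Differentiable ℂ φ)
    {k N : ℕ} {p : ℂ} {ϱ G E : ℝ} (hϱ : 0 < ϱ)
    (hode : ∀ z ∈ closedBall p ϱ, iteratedDeriv k φ z = g z * φ z + e z)
    (hg : ∀ z ∈ closedBall p ϱ, G ≤ ‖g z‖) (he : ∀ z ∈ closedBall p ϱ, ‖e z‖ ≤ E)
    (hG : 6 * k.factorial * (N / ϱ) ^ k ≤ G) (hp : 2 * E ≤ G * ‖φ p‖) :
    ∃ q ∈ closedBall p ϱ, Real.exp N * ‖φ p‖ ≤ ‖φ q‖ := by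
  refine exists_exp_mul_norm_le_of_le_norm_iteratedDeriv (k := k) hϱ hφ fun z hz hpz => ?_
  have hG0 : 0 ≤ G := le_trans (by positivity) hG
  calc 3 * k.factorial * (N / ϱ) ^ k * ‖φ z‖
      = 6 * k.factorial * (N / ϱ) ^ k * ‖φ z‖ / 2 := by ring
    _ ≤ G * ‖φ z‖ / 2 := by gcongr
    _ ≤ G * ‖φ z‖ - E := by linarith [mul_le_mul_of_nonneg_left hpz hG0]
    _ ≤ ‖g z * φ z‖ - ‖e z‖ := by rw [norm_mul]; gcongr; exacts [hg z hz, he z hz]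
    _ ≤ ‖iteratedDeriv k φ z‖ := by
      rw [hode z hz]
      simpa only [norm_neg, sub_neg_eq_add] using norm_sub_norm_le (g z * φ z) (-e z)

section Gronwall

variable {F : Type*} [NormedAddCommGroup F] [NormedSpace ℝ F] {y : ℝ → F} {k : ℕ} {l ε : ℝ}

/-- The vector `(y, y' / l, …, y⁽ᵏ⁻¹⁾ / lᵏ⁻¹)`, weighted so that an inequality
`‖y⁽ᵏ⁾‖ ≤ lᵏ ‖y‖ + ε` becomes a first order one with rate `l`. -/
noncomputable def weightedJet (k : ℕ) (l : ℝ) (y : ℝ → F) (t : ℝ) : Fin k → F :=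
  fun j => (l ^ (j : ℕ))⁻¹ • iteratedDeriv j y t

theorem hasDerivAt_weightedJet (hy : ContDiff ℝ k y) (t : ℝ) :
    HasDerivAt (weightedJet k l y)
      (fun j => (l ^ (j : ℕ))⁻¹ • iteratedDeriv ((j : ℕ) + 1) y t) t := by
  refine hasDerivAt_pi.2 fun j => HasDerivAt.const_smul _ ?_
  rw [iteratedDeriv_succ]
  exact (hy.differentiable_iteratedDeriv j (by exact_mod_cast j.2) t).hasDerivAt

theorem norm_le_norm_weightedJet [NeZero k] {t : ℝ} : ‖y t‖ ≤ ‖weightedJet k l y t‖ := by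
  simpa [weightedJet] using norm_le_pi_norm (weightedJet k l y t) 0

theorem norm_deriv_weightedJet_le [NeZero k] (hl : 0 < l) (hε : 0 ≤ ε) {t : ℝ}
    (hode : ‖iteratedDeriv k y t‖ ≤ l ^ k * ‖y t‖ + ε) :
    ‖fun j : Fin k => (l ^ (j : ℕ))⁻¹ • iteratedDeriv ((j : ℕ) + 1) y t‖
      ≤ l * ‖weightedJet k l y t‖ + l * (ε / l ^ k) := by
  refine (pi_norm_le_iff_of_nonneg (by positivity)).2 fun j => ?_
  have hnorm : ‖(l ^ (j : ℕ))⁻¹ • iteratedDeriv ((j : ℕ) + 1) y t‖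
      = l * (‖iteratedDeriv ((j : ℕ) + 1) y t‖ / l ^ ((j : ℕ) + 1)) := by
    rw [norm_smul, Real.norm_of_nonneg (by positivity), pow_succ]
    field_simp
  rw [hnorm, ← mul_add]
  gcongr
  obtain hj | hj : (j : ℕ) + 1 < k ∨ (j : ℕ) + 1 = k := by omega
  · have hcoord := norm_le_pi_norm (weightedJet k l y t) ⟨(j : ℕ) + 1, hj⟩
    rw [weightedJet, norm_smul, Real.norm_of_nonneg (by positivity), inv_mul_eq_div] at hcoord
    exact hcoord.trans (le_add_of_nonneg_right (by positivity))
  · have hcoord := norm_le_norm_weightedJet (y := y) (k := k) (l := l) (t := t)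
    rw [hj, div_le_iff₀ (by positivity), add_mul, div_mul_cancel₀ _ (by positivity)]
    exact hode.trans (by rw [mul_comm]; gcongr)

theorem norm_le_exp_of_norm_iteratedDeriv_le (hk : k ≠ 0) (hy : ContDiff ℝ k y) (hl : 0 < l)
    (hε : 0 ≤ ε) {x Y : ℝ} (hx : 0 ≤ x)
    (hode : ∀ t ∈ Ico 0 x, ‖iteratedDeriv k y t‖ ≤ l ^ k * ‖y t‖ + ε)
    (h0 : ∀ j < k, ‖iteratedDeriv j y 0‖ ≤ l ^ j * Y) :
    ‖y x‖ ≤ (Y + ε / l ^ k) * Real.exp (l * x) := by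
  have : NeZero k := ⟨hk⟩
  have hY : 0 ≤ Y := by simpa using (norm_nonneg _).trans (h0 0 (Nat.pos_of_ne_zero hk))
  have hinit : ‖weightedJet k l y 0‖ ≤ Y := by
    refine (pi_norm_le_iff_of_nonneg hY).2 fun j => ?_
    rw [weightedJet, norm_smul, Real.norm_of_nonneg (by positivity),
      inv_mul_le_iff₀ (by positivity)]
    exact h0 j j.2
  have hgronwall := norm_le_gronwallBound_of_norm_deriv_right_le
    (fun t _ => (hasDerivAt_weightedJet hy t).continuousAt.continuousWithinAt)
    (fun t _ => (hasDerivAt_weightedJet hy t).hasDerivWithinAt) hinit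
    (fun t ht => norm_deriv_weightedJet_le hl hε (hode t ht)) x ⟨hx, le_rfl⟩
  rw [gronwallBound_of_K_ne_0 hl.ne', sub_zero, mul_div_cancel_left₀ _ hl.ne'] at hgronwall
  have hcoord := norm_le_norm_weightedJet (y := y) (k := k) (l := l) (t := x)
  have hq : 0 ≤ ε / l ^ k := by positivity
  linarith

end Gronwall

theorem hasDerivAt_iteratedDeriv {φ : ℂ → ℂ} (hφ : Differentiable ℂ φ) (j : ℕ) (z : ℂ) :
    HasDerivAt (iteratedDeriv j φ) (iteratedDeriv (j + 1) φ z) z := by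
  rw [iteratedDeriv_succ]
  exact (hφ.contDiff.differentiable_iteratedDeriv' j z).hasDerivAt

theorem iteratedDeriv_comp_add_ofReal_mul {φ : ℂ → ℂ} (hφ : Differentiable ℂ φ) (z u : ℂ)
    (j : ℕ) : iteratedDeriv j (fun t : ℝ => φ (z + t * u))
      = fun t : ℝ => u ^ j * iteratedDeriv j φ (z + t * u) := by
  induction j with
  | zero => simp
  | succ j ih =>
    rw [iteratedDeriv_succ, ih]
    funext t
    have hline : HasDerivAt (fun s : ℂ => z + s * u) u (t : ℂ) := by
      simpa using ((hasDerivAt_id (t : ℂ)).mul_const u).const_add z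
    have hcomp := ((hasDerivAt_iteratedDeriv hφ j _).comp (t : ℂ) hline).comp_ofReal
    refine (hcomp.const_mul (u ^ j)).deriv.trans ?_
    ring

end

section

open Metric Set

/-! ### Estimates for holomorphic functions on discs -/

section ThreeCircles

variable {F : Type*} [NormedAddCommGroup F] [NormedSpace ℂ F] {f : ℂ → F} {c z : ℂ}

theorem norm_le_of_forall_mem_annulus_boundary {r₁ r₃ C : ℝ}
    (hf : DiffContOnCl ℂ f (ball c r₃ \ closedBall c r₁))
    (hC₁ : ∀ z ∈ sphere c r₁, ‖f z‖ ≤ C) (hC₃ : ∀ z ∈ sphere c r₃, ‖f z‖ ≤ C)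
    (hz₁ : r₁ ≤ dist z c) (hz₃ : dist z c ≤ r₃) : ‖f z‖ ≤ C := by
  rcases hz₁.eq_or_lt with h | hz₁
  · exact hC₁ z h.symm
  rcases hz₃.eq_or_lt with h | hz₃
  · exact hC₃ z h
  refine Complex.norm_le_of_forall_mem_frontier_norm_le (isBounded_ball.subset sdiff_subset) hf
    (fun w hw => ?_) (subset_closure ⟨hz₃, not_le.2 hz₁⟩)
  have hclosure : ball c r₃ \ closedBall c r₁ ⊆ closedBall c r₃ \ ball c r₁ :=
    sdiff_subset_sdiff ball_subset_closedBall ball_subset_closedBall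
  rw [(isOpen_ball.sdiff isClosed_closedBall).frontier_eq] at hw
  obtain ⟨hw₃, hw₁⟩ := closure_minimal hclosure (isClosed_closedBall.sdiff isOpen_ball) hw.1
  rw [mem_closedBall] at hw₃
  rw [mem_ball, not_lt] at hw₁
  rcases hw₁.eq_or_lt with h | hw₁
  · exact hC₁ w h.symm
  rcases hw₃.eq_or_lt with h | hw₃
  · exact hC₃ w h
  exact absurd ⟨hw₃, not_le.2 hw₁⟩ hw.2

-- Hadamard's convexity, obtained by applying the maximum principle to `f / (z - c) ^ m`.
theorem norm_le_max_of_three_circles {r₁ r₂ r₃ ε M : ℝ} (h₁ : 0 < r₁) (h₁₂ : r₁ ≤ r₂)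
    (h₂₃ : r₂ ≤ r₃) (hf : DiffContOnCl ℂ f (ball c r₃)) (hε : ∀ z ∈ closedBall c r₁, ‖f z‖ ≤ ε)
    (hM : ∀ z ∈ sphere c r₃, ‖f z‖ ≤ M) (m : ℕ) (hz : z ∈ closedBall c r₂) :
    ‖f z‖ ≤ max (ε * (r₂ / r₁) ^ m) (M * (r₂ / r₃) ^ m) := by
  have h₃ : 0 < r₃ := h₁.trans_le (h₁₂.trans h₂₃)
  have hε0 : 0 ≤ ε := (norm_nonneg _).trans (hε c (mem_closedBall_self h₁.le))
  rw [mem_closedBall] at hz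
  rcases le_or_gt (dist z c) r₁ with hz₁ | hz₁
  · exact le_max_of_le_left <| (hε z hz₁).trans <|
      le_mul_of_one_le_right hε0 (one_le_pow₀ ((one_le_div h₁).2 h₁₂))
  set C := max (ε / r₁ ^ m) (M / r₃ ^ m)
  have hzpow : DiffContOnCl ℂ (fun w => ((w - c) ^ m)⁻¹) (ball c r₃ \ closedBall c r₁) := by
    refine DifferentiableOn.diffContOnCl fun w hw => ?_
    have hsub : ball c r₃ \ closedBall c r₁ ⊆ (ball c r₁)ᶜ :=
      fun x hx hx₁ => hx.2 (ball_subset_closedBall hx₁)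
    have hwc : w - c ≠ 0 := sub_ne_zero.2 fun h =>
      closure_minimal hsub isOpen_ball.isClosed_compl hw (h ▸ mem_ball_self h₁)
    have hpow : DifferentiableAt ℂ (fun x => (x - c) ^ m) w := by fun_prop
    exact (hpow.inv (pow_ne_zero m hwc)).differentiableWithinAt
  have hquot : ∀ w, ‖((w - c) ^ m)⁻¹ • f w‖ = ‖f w‖ / dist w c ^ m := fun w => by
    rw [norm_smul, norm_inv, norm_pow, ← dist_eq_norm, inv_mul_eq_div]
  have hmax : ‖((z - c) ^ m)⁻¹ • f z‖ ≤ C := by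
    refine norm_le_of_forall_mem_annulus_boundary (hzpow.smul (hf.mono sdiff_subset))
      (fun w hw => ?_) (fun w hw => ?_) hz₁.le (hz.trans h₂₃)
    · rw [hquot, mem_sphere.1 hw]
      exact le_max_of_le_left (by gcongr; exact hε w (mem_closedBall.2 hw.le))
    · rw [hquot, mem_sphere.1 hw]
      exact le_max_of_le_right (by gcongr; exact hM w hw)
  rw [hquot, div_le_iff₀ (pow_pos (h₁.trans hz₁) m)] at hmax
  calc ‖f z‖ ≤ C * dist z c ^ m := hmax
    _ ≤ C * r₂ ^ m := by
      gcongr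
    _ = max (ε * (r₂ / r₁) ^ m) (M * (r₂ / r₃) ^ m) := by
      rw [max_mul_of_nonneg _ _ (pow_nonneg (h₁.le.trans h₁₂) m)]
      ring_nf

end ThreeCircles

section RealPart

variable {h : ℂ → ℂ} {w z z₀ : ℂ} {t : ℝ}

theorem norm_sub_le_mul_norm_add_conj_of_re_pos (hh : DifferentiableOn ℂ h (ball w t))
    (hpos : ∀ z ∈ ball w t, 0 < (h z).re) (hz : z ∈ ball w t) :
    ‖h z - h w‖ ≤ dist z w / t * ‖h z + (starRingEnd ℂ) (h w)‖ := by
  have ht : 0 < t := dist_nonneg.trans_lt hz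
  have hw : 0 < (h w).re := hpos w (mem_ball_self ht)
  have hden : ∀ z ∈ ball w t, h z + (starRingEnd ℂ) (h w) ≠ 0 := fun z hz h0 => by
    have hre := congrArg Complex.re h0
    rw [Complex.add_re, Complex.conj_re, Complex.zero_re] at hre
    linarith [hpos z hz]
  let ψ : ℂ → ℂ := fun z => (h z - h w) / (h z + (starRingEnd ℂ) (h w))
  have hψ : DifferentiableOn ℂ ψ (ball w t) := (hh.sub_const _).div (hh.add_const _) hden
  have hψw : ψ w = 0 := by simp [ψ]
  have hmaps : MapsTo ψ (ball w t) (closedBall (ψ w) 1) := by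
    intro z hz
    rw [hψw, mem_closedBall, dist_zero_right, norm_div, div_le_one (norm_pos_iff.2 (hden z hz)),
      ← sq_le_sq₀ (norm_nonneg _) (norm_nonneg _), Complex.sq_norm, Complex.sq_norm]
    simp only [Complex.normSq_apply, Complex.sub_re, Complex.sub_im, Complex.add_re,
      Complex.add_im, Complex.conj_re, Complex.conj_im]
    nlinarith [hpos z hz]
  have hschwarz := Complex.dist_le_div_mul_dist_of_mapsTo_ball hψ hmaps hz
  rwa [hψw, dist_zero_right, norm_div, div_le_iff₀ (norm_pos_iff.2 (hden z hz)),
    one_div_mul_eq_div] at hschwarz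

theorem re_mul_sub_dist_le_re_mul_add_dist (hh : DifferentiableOn ℂ h (ball w t))
    (hpos : ∀ z ∈ ball w t, 0 < (h z).re) (hz : z ∈ ball w t) :
    (h w).re * (t - dist z w) ≤ (h z).re * (t + dist z w) := by
  have ht : 0 < t := dist_nonneg.trans_lt hz
  have hw : 0 < (h w).re := hpos w (mem_ball_self ht)
  set s := dist z w / t
  have hs : s ^ 2 ≤ 1 := pow_le_one₀ (by positivity) ((div_le_one ht).2 (mem_ball.1 hz).le)
  have hsq := pow_le_pow_left₀ (norm_nonneg _)
    (norm_sub_le_mul_norm_add_conj_of_re_pos hh hpos hz) 2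
  rw [mul_pow, Complex.sq_norm, Complex.sq_norm] at hsq
  simp only [Complex.normSq_apply, Complex.sub_re, Complex.sub_im, Complex.add_re,
    Complex.add_im, Complex.conj_re, Complex.conj_im] at hsq
  have hre : ((h z).re - (h w).re) ^ 2 ≤ (s * ((h z).re + (h w).re)) ^ 2 := by
    nlinarith [mul_nonneg (sub_nonneg.2 hs) (sq_nonneg ((h z).im - (h w).im))]
  have hlow := (abs_le_of_sq_le_sq' hre (by have := hpos z hz; positivity)).1
  have hst : dist z w = s * t := by simp only [s]; field_simp
  rw [hst]
  nlinarith

-- Hopf's boundary point lemma, from Harnack's inequality along the radius towards `z₀`.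
theorem re_le_two_mul_norm_deriv_mul_dist (hh : DifferentiableOn ℂ h (ball w (dist z₀ w)))
    (hhz₀ : DifferentiableAt ℂ h z₀) (hpos : ∀ z ∈ ball w (dist z₀ w), 0 < (h z).re)
    (hz₀ : (h z₀).re = 0) (hne : z₀ ≠ w) : (h w).re ≤ 2 * (‖deriv h z₀‖ * dist z₀ w) := by
  have ht : 0 < dist z₀ w := dist_pos.2 hne
  have hw : 0 < (h w).re := hpos w (mem_ball_self ht)
  let g : ℝ → ℝ := fun s => (h (w + s * (z₀ - w))).re
  have hg1 : g 1 = 0 := by simp [g, hz₀]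
  have hg : HasDerivAt g (deriv h z₀ * (z₀ - w)).re 1 := by
    have hline : HasDerivAt (fun s : ℂ => w + s * (z₀ - w)) (z₀ - w) ((1 : ℝ) : ℂ) := by
      simpa using ((hasDerivAt_id ((1 : ℝ) : ℂ)).mul_const (z₀ - w)).const_add w
    have hhd : HasDerivAt h (deriv h z₀) (w + ((1 : ℝ) : ℂ) * (z₀ - w)) := by
      simpa using hhz₀.hasDerivAt
    exact (hhd.comp ((1 : ℝ) : ℂ) hline).real_of_complex
  have hharnack : ∀ s ∈ Ioo (0 : ℝ) 1, (h w).re / 2 * (1 - s) ≤ g s := fun s hs => by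
    have hdist : dist (w + s * (z₀ - w)) w = s * dist z₀ w := by
      rw [dist_eq_norm, dist_eq_norm, add_sub_cancel_left, norm_mul, Complex.norm_real,
        Real.norm_of_nonneg hs.1.le]
    have hmem : w + s * (z₀ - w) ∈ ball w (dist z₀ w) := by
      rw [mem_ball, hdist]
      exact mul_lt_of_lt_one_left ht hs.2
    have hle := re_mul_sub_dist_le_re_mul_add_dist hh hpos hmem
    rw [hdist] at hle
    have hscaled : (h w).re * (1 - s) ≤ g s * (1 + s) :=
      le_of_mul_le_mul_right (by linarith) ht
    nlinarith [hs.2, hpos _ hmem]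
  have hslope : (deriv h z₀ * (z₀ - w)).re ≤ -((h w).re / 2) := by
    refine le_of_tendsto (hasDerivAt_iff_tendsto_slope_left_right.1 hg).1 ?_
    filter_upwards [Ioo_mem_nhdsLT (zero_lt_one' ℝ)] with s hs
    rw [slope_def_field, hg1, div_le_iff_of_neg (by linarith [hs.2])]
    linarith [hharnack s hs]
  have hnorm := (abs_le.1 (Complex.abs_re_le_norm (deriv h z₀ * (z₀ - w)))).1
  rw [norm_mul, ← dist_eq_norm] at hnorm
  linarith

theorem exists_re_eq_zero_and_re_le_norm_deriv (hh : Differentiable ℂ h) {b : ℂ}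
    (hw : 0 < (h w).re) (hb : (h b).re = 0) :
    ∃ z, (h z).re = 0 ∧ dist z w ≤ dist b w ∧ (h w).re ≤ 2 * (‖deriv h z‖ * dist z w) := by
  have hre : Continuous fun z => (h z).re := Complex.continuous_re.comp hh.continuous
  obtain ⟨z, hz, hmin⟩ := (isClosed_eq hre continuous_const).exists_infDist_eq_dist ⟨b, hb⟩ w
  have hnearest : ∀ y, (h y).re = 0 → dist z w ≤ dist y w := fun y hy => by
    rw [dist_comm z, ← hmin, dist_comm y]
    exact infDist_le_dist_of_mem hy
  refine ⟨z, hz, hnearest b hb,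
    re_le_two_mul_norm_deriv_mul_dist hh.differentiableOn (hh z) (fun y hy => ?_) hz ?_⟩
  · by_contra! hneg
    obtain ⟨x, hx, hx0⟩ := (convex_ball w (dist z w)).isPreconnected.intermediate_value hy
      (mem_ball_self (dist_nonneg.trans_lt hy)) hre.continuousOn ⟨hneg, hw.le⟩
    exact (hnearest x hx0).not_gt hx
  · rintro rfl
    exact hw.ne' hz

theorem norm_sub_le_of_re_le {A ρ : ℝ} (hA : 0 < A) (hh : DifferentiableOn ℂ h (ball z₀ ρ))
    (hre : ∀ z ∈ ball z₀ ρ, (h z).re ≤ (h z₀).re + A) (hz : z ∈ ball z₀ ρ) :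
    ‖h z - h z₀‖ ≤ 2 * A * dist z z₀ / (ρ - dist z z₀) := by
  have hshift : MapsTo (· + z₀) (ball 0 ρ) (ball z₀ ρ) := fun u hu => by
    simpa [dist_eq_norm] using hu
  have hbc := Complex.borelCaratheodory_zero (f := fun u => h (u + z₀) - h z₀) (z := z - z₀) hA
    ((hh.comp (differentiable_id.add_const z₀).differentiableOn hshift).sub_const _)
    (fun u hu => by simpa [sub_le_iff_le_add, add_comm] using hre _ (hshift hu))
    (dist_nonneg.trans_lt hz) (by simpa [dist_eq_norm] using hz) (by simp)
  simpa only [sub_add_cancel, ← dist_eq_norm z] using hbc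

theorem norm_deriv_le_of_re_le {A ρ : ℝ} (hA : 0 < A) (hρ : 0 < ρ)
    (hh : DifferentiableOn ℂ h (ball z₀ ρ))
    (hre : ∀ z ∈ ball z₀ ρ, (h z).re ≤ (h z₀).re + A) (hw : dist w z₀ ≤ ρ / 2) :
    ‖deriv h w‖ ≤ 24 * A / ρ := by
  have hsub : closedBall w (ρ / 4) ⊆ closedBall z₀ (3 / 4 * ρ) :=
    closedBall_subset_closedBall' (by linarith)
  have hdisc : DiffContOnCl ℂ (fun z => h z - h z₀) (ball w (ρ / 4)) :=
    DifferentiableOn.diffContOnCl <| (hh.sub_const _).mono <| closure_ball_subset_closedBall.trans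
      (hsub.trans (closedBall_subset_ball (by linarith)))
  have hbound : ∀ z ∈ sphere w (ρ / 4), ‖h z - h z₀‖ ≤ 6 * A := fun z hz => by
    have hd : dist z z₀ ≤ 3 / 4 * ρ := hsub (sphere_subset_closedBall hz)
    refine (norm_sub_le_of_re_le hA hh hre (by rw [mem_ball]; linarith)).trans ?_
    rw [div_le_iff₀ (by linarith)]
    nlinarith
  have hcauchy := Complex.norm_deriv_le_of_forall_mem_sphere_norm_le (by positivity) hdisc hbound
  rw [deriv_sub_const] at hcauchy
  exact hcauchy.trans_eq (by field_simp; norm_num)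

theorem norm_deriv_sub_le_of_re_le {A ρ : ℝ} (hA : 0 < A) (hρ : 0 < ρ)
    (hh : DifferentiableOn ℂ h (ball z₀ ρ))
    (hre : ∀ z ∈ ball z₀ ρ, (h z).re ≤ (h z₀).re + A) (hw : dist w z₀ < ρ / 2) :
    ‖deriv h w - deriv h z₀‖ ≤ 96 * A / ρ ^ 2 * dist w z₀ := by
  have hderiv : ∀ z, dist z z₀ ≤ ρ / 2 → ‖deriv h z‖ ≤ 24 * A / ρ :=
    fun z hz => norm_deriv_le_of_re_le hA hρ hh hre hz
  have hmaps : MapsTo (deriv h) (ball z₀ (ρ / 2)) (closedBall (deriv h z₀) (48 * A / ρ)) :=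
    fun z hz => calc
      dist (deriv h z) (deriv h z₀) ≤ ‖deriv h z‖ + ‖deriv h z₀‖ := dist_le_norm_add_norm _ _
      _ ≤ 24 * A / ρ + 24 * A / ρ := by
        gcongr
        · exact hderiv z (mem_ball.1 hz).le
        · exact hderiv z₀ (by rw [dist_self]; positivity)
      _ = 48 * A / ρ := by ring
  have hschwarz := Complex.dist_le_div_mul_dist_of_mapsTo_ball
    ((hh.deriv isOpen_ball).mono (ball_subset_ball (by linarith))) hmaps (mem_ball.2 hw)
  rw [dist_eq_norm] at hschwarz
  exact hschwarz.trans_eq (by field_simp; ring)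

end RealPart

end

section

open Metric Set

/-! ### Entire functions with small real part are affine -/

variable {h : ℂ → ℂ} {w₀ b : ℂ} {σ : ℝ}

theorem frequently_rpow_le_re_of_deriv_ne_zero (hh : Differentiable ℂ h) (hw₀ : deriv h w₀ ≠ 0)
    (hσ : σ < 1) : ∃ᶠ r : ℝ in atTop, ∃ w, ‖w‖ ≤ r ∧ r ^ σ ≤ (h w).re := by
  intro hsmall
  have hlim : Tendsto (fun r : ℝ => 24 * r ^ (σ - 1) + 24 * (|(h 0).re| + 1) / r) atTop
      (nhds (24 * 0 + 0)) := by
    refine Tendsto.add ?_ (tendsto_const_nhds.div_atTop tendsto_id)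
    simpa only [neg_sub] using (tendsto_rpow_neg_atTop (sub_pos.2 hσ)).const_mul 24
  rw [mul_zero, add_zero] at hlim
  refine hw₀ (norm_le_zero_iff.1 (ge_of_tendsto hlim ?_))
  filter_upwards [hsmall, eventually_ge_atTop 1, eventually_ge_atTop (2 * ‖w₀‖)] with r hr hr₁ hr₂
  push Not at hr
  have hr₀ : 0 < r := one_pos.trans_le hr₁
  have hre : ∀ z ∈ ball 0 r, (h z).re ≤ (h 0).re + (r ^ σ + (|(h 0).re| + 1)) := fun z hz => by
    linarith [hr z (mem_ball_zero_iff.1 hz).le, neg_abs_le (h 0).re]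
  calc ‖deriv h w₀‖ ≤ 24 * (r ^ σ + (|(h 0).re| + 1)) / r :=
        norm_deriv_le_of_re_le (by positivity) hr₀ hh.differentiableOn hre
          (by rw [dist_zero_right]; linarith)
    _ = 24 * r ^ (σ - 1) + 24 * (|(h 0).re| + 1) / r := by
        rw [Real.rpow_sub_one hr₀.ne']
        ring

theorem frequently_rpow_le_re_of_deriv_ne (hh : Differentiable ℂ h) (hw₀ : deriv h w₀ ≠ deriv h 0)
    (hσ : σ < 2) : ∃ᶠ r : ℝ in atTop, ∃ w, ‖w‖ ≤ r ∧ r ^ σ ≤ (h w).re := by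
  intro hsmall
  have hlim : Tendsto (fun r : ℝ => 96 * ‖w₀‖ * r ^ (σ - 2)
      + 96 * ‖w₀‖ * (|(h 0).re| + 1) / r ^ 2) atTop (nhds (96 * ‖w₀‖ * 0 + 0)) := by
    refine Tendsto.add ?_ (tendsto_const_nhds.div_atTop (tendsto_pow_atTop two_ne_zero))
    simpa only [neg_sub] using (tendsto_rpow_neg_atTop (sub_pos.2 hσ)).const_mul (96 * ‖w₀‖)
  rw [mul_zero, add_zero] at hlim
  refine hw₀ (sub_eq_zero.1 (norm_le_zero_iff.1 (ge_of_tendsto hlim ?_)))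
  filter_upwards [hsmall, eventually_ge_atTop 1, eventually_gt_atTop (2 * ‖w₀‖)] with r hr hr₁ hr₂
  push Not at hr
  have hr₀ : 0 < r := one_pos.trans_le hr₁
  have hre : ∀ z ∈ ball 0 r, (h z).re ≤ (h 0).re + (r ^ σ + (|(h 0).re| + 1)) := fun z hz => by
    linarith [hr z (mem_ball_zero_iff.1 hz).le, neg_abs_le (h 0).re]
  calc ‖deriv h w₀ - deriv h 0‖ ≤ 96 * (r ^ σ + (|(h 0).re| + 1)) / r ^ 2 * dist w₀ 0 :=
        norm_deriv_sub_le_of_re_le (by positivity) hr₀ hh.differentiableOn hre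
          (by rw [dist_zero_right]; linarith)
    _ = 96 * ‖w₀‖ * r ^ (σ - 2) + 96 * ‖w₀‖ * (|(h 0).re| + 1) / r ^ 2 := by
        rw [dist_zero_right, Real.rpow_sub hr₀, Real.rpow_two]
        ring

theorem exists_re_pos_of_deriv_ne_zero (hh : Differentiable ℂ h) (hw₀ : deriv h w₀ ≠ 0) :
    ∃ w, 0 < (h w).re := by
  obtain ⟨r, ⟨w, _, hw⟩, hr⟩ := ((frequently_rpow_le_re_of_deriv_ne_zero hh hw₀
    zero_lt_one).and_eventually (eventually_gt_atTop 0)).exists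
  exact ⟨w, (Real.rpow_pos_of_pos hr _).trans_le hw⟩

theorem exists_re_eq_zero_of_deriv_ne_zero (hh : Differentiable ℂ h) (hw₀ : deriv h w₀ ≠ 0) :
    ∃ b, (h b).re = 0 := by
  obtain ⟨w, hw⟩ := exists_re_pos_of_deriv_ne_zero hh hw₀
  obtain ⟨v, hv⟩ := exists_re_pos_of_deriv_ne_zero (h := -h) hh.neg (w₀ := w₀)
    (by rwa [deriv.neg, neg_ne_zero])
  rw [Pi.neg_apply, Complex.neg_re] at hv
  exact mem_range_of_exists_le_of_exists_ge (Complex.continuous_re.comp hh.continuous)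
    ⟨v, by simpa using hv.le⟩ ⟨w, hw.le⟩

/-! ### Discs on which an entire function is almost affine -/

/-- The disc of radius `δ` about `z₀` is almost affine for `h` if `Re h` vanishes at `z₀` and `h'`
is nearly constant on the disc, with relative variation at most `dist z z₀ / (10 * δ)`. The factor
`10` leaves room for all later uses. -/
structure IsAlmostAffineDisc (h : ℂ → ℂ) (z₀ : ℂ) (δ : ℝ) : Prop where
  radius_pos : 0 < δ
  re_center : (h z₀).re = 0
  norm_deriv_sub_le : ∀ z ∈ ball z₀ δ,
    ‖deriv h z - deriv h z₀‖ ≤ ‖deriv h z₀‖ * (dist z z₀ / (10 * δ))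

theorem exists_re_eq_zero_and_mul_re_le (hh : Differentiable ℂ h) {r : ℝ} {w b : ℂ}
    (hr : 0 ≤ r) (hwr : ‖w‖ ≤ r) (hbr : ‖b‖ ≤ r) (hw : 0 < (h w).re) (hb : (h b).re = 0) :
    ∃ z, (h z).re = 0 ∧ ‖z‖ ≤ 3 * r ∧ r * (h w).re ≤ 4 * (‖deriv h z‖ * r ^ 2) := by
  obtain ⟨z, hz, hzb, hle⟩ := exists_re_eq_zero_and_re_le_norm_deriv hh hw hb
  have hzw : dist z w ≤ 2 * r := by linarith [dist_le_norm_add_norm b w]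
  refine ⟨z, hz, by linarith [norm_le_norm_add_norm_sub' z w, dist_eq_norm z w], ?_⟩
  calc r * (h w).re ≤ r * (2 * (‖deriv h z‖ * (2 * r))) := by
        gcongr
        exact hle.trans (by gcongr)
    _ = 4 * (‖deriv h z‖ * r ^ 2) := by ring

-- `z₀` maximizes `‖h' z‖ * (4 * r - ‖z‖) ^ 2` over the zeros of `Re h` in `closedBall 0 (4 * r)`.
theorem exists_re_eq_zero_and_forall_norm_deriv_le (hh : Differentiable ℂ h) {r : ℝ} {w b : ℂ}
    (hr : 0 < r) (hwr : ‖w‖ ≤ r) (hbr : ‖b‖ ≤ r) (hw : 0 < (h w).re) (hb : (h b).re = 0) :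
    ∃ z₀ η, 0 < η ∧ (h z₀).re = 0 ∧ ‖z₀‖ + 2 * η ≤ 4 * r ∧
      r * (h w).re ≤ 16 * (‖deriv h z₀‖ * η ^ 2) ∧
      ∀ z, (h z).re = 0 → dist z z₀ ≤ η → ‖deriv h z‖ ≤ 4 * ‖deriv h z₀‖ := by
  have hcont : Continuous (deriv h) := (hh.contDiff (n := 1)).continuous_deriv le_rfl
  have hcompact : IsCompact ({z | (h z).re = 0} ∩ closedBall 0 (4 * r)) :=
    (isCompact_closedBall 0 (4 * r)).inter_left
      (isClosed_eq (Complex.continuous_re.comp hh.continuous) continuous_const)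
  obtain ⟨z₁, hz₁, hz₁r, hle₁⟩ := exists_re_eq_zero_and_mul_re_le hh hr.le hwr hbr hw hb
  obtain ⟨z₀, ⟨hz₀, hz₀r⟩, hmax⟩ := hcompact.exists_isMaxOn
    (f := fun z => ‖deriv h z‖ * (4 * r - ‖z‖) ^ 2)
    ⟨z₁, hz₁, by rw [mem_closedBall_zero_iff]; linarith⟩ (by fun_prop)
  rw [mem_closedBall_zero_iff] at hz₀r
  have hmax' : ∀ z, (h z).re = 0 → ‖z‖ ≤ 4 * r →
      ‖deriv h z‖ * (4 * r - ‖z‖) ^ 2 ≤ ‖deriv h z₀‖ * (4 * r - ‖z₀‖) ^ 2 :=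
    fun z hz hzr => hmax ⟨hz, mem_closedBall_zero_iff.2 hzr⟩
  obtain ⟨η, hη⟩ : ∃ η, 4 * r - ‖z₀‖ = 2 * η := ⟨(4 * r - ‖z₀‖) / 2, by ring⟩
  rw [hη] at hmax'
  have hlower : r * (h w).re ≤ 16 * (‖deriv h z₀‖ * η ^ 2) := by
    have hsq : r ^ 2 ≤ (4 * r - ‖z₁‖) ^ 2 := by gcongr; linarith
    calc r * (h w).re ≤ 4 * (‖deriv h z₁‖ * r ^ 2) := hle₁
      _ ≤ 4 * (‖deriv h z₁‖ * (4 * r - ‖z₁‖) ^ 2) := by gcongr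
      _ ≤ 4 * (‖deriv h z₀‖ * (2 * η) ^ 2) := by linarith [hmax' z₁ hz₁ (by linarith)]
      _ = 16 * (‖deriv h z₀‖ * η ^ 2) := by ring
  have hη₀ : 0 < η := by
    refine lt_of_le_of_ne (by linarith) fun h0 => ?_
    rw [← h0] at hlower
    linarith [mul_pos hr hw]
  refine ⟨z₀, η, hη₀, hz₀, by linarith, hlower, fun z hz hzη => ?_⟩
  have hzr : ‖z‖ ≤ ‖z₀‖ + η := by
    linarith [norm_le_norm_add_norm_sub' z z₀, dist_eq_norm z z₀]
  have hle : ‖deriv h z‖ * η ^ 2 ≤ 4 * ‖deriv h z₀‖ * η ^ 2 :=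
    calc ‖deriv h z‖ * η ^ 2 ≤ ‖deriv h z‖ * (4 * r - ‖z‖) ^ 2 := by gcongr; linarith
      _ ≤ ‖deriv h z₀‖ * (2 * η) ^ 2 := hmax' z hz (by linarith)
      _ = 4 * ‖deriv h z₀‖ * η ^ 2 := by ring
  exact le_of_mul_le_mul_right hle (by positivity)

theorem re_le_of_forall_norm_deriv_le (hh : Differentiable ℂ h) {z₀ z : ℂ} {η D : ℝ}
    (hz₀ : (h z₀).re = 0) (hD : ∀ z, (h z).re = 0 → dist z z₀ ≤ η → ‖deriv h z‖ ≤ D)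
    (hz : z ∈ ball z₀ (η / 2)) : (h z).re ≤ D * η := by
  rw [mem_ball] at hz
  have hη : 0 < η := by linarith [dist_nonneg (x := z) (y := z₀)]
  have hD₀ : 0 ≤ D := (norm_nonneg _).trans (hD z₀ hz₀ (by rw [dist_self]; exact hη.le))
  rcases le_or_gt (h z).re 0 with hneg | hpos
  · exact hneg.trans (by positivity)
  obtain ⟨y, hy, hyz, hle⟩ := exists_re_eq_zero_and_re_le_norm_deriv hh hpos hz₀
  rw [dist_comm z₀] at hyz
  calc (h z).re ≤ 2 * (‖deriv h y‖ * dist y z) := hle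
    _ ≤ 2 * (D * (η / 2)) := by
      gcongr
      · exact hD y hy (by linarith [dist_triangle y z z₀])
      · linarith
    _ = D * η := by ring

theorem exists_isAlmostAffineDisc (hh : Differentiable ℂ h) {r : ℝ} {w b : ℂ} (hr : 0 < r)
    (hwr : ‖w‖ ≤ r) (hbr : ‖b‖ ≤ r) (hw : 0 < (h w).re) (hb : (h b).re = 0) :
    ∃ z₀ δ, IsAlmostAffineDisc h z₀ δ ∧ ‖z₀‖ + δ ≤ 4 * r ∧
      r * (h w).re ≤ 16 * (‖deriv h z₀‖ * (20000 * δ) ^ 2) := by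
  obtain ⟨z₀, η, hη, hz₀, hz₀r, hlower, hnear⟩ :=
    exists_re_eq_zero_and_forall_norm_deriv_le hh hr hwr hbr hw hb
  have hL : 0 < ‖deriv h z₀‖ := norm_pos_iff.2 fun h0 => by
    rw [h0, norm_zero, zero_mul, mul_zero] at hlower
    linarith [mul_pos hr hw]
  refine ⟨z₀, η / 20000, ⟨by positivity, hz₀, fun z hz => ?_⟩, by linarith, ?_⟩
  · rw [mem_ball] at hz
    have hre : ∀ z ∈ ball z₀ (η / 2), (h z).re ≤ (h z₀).re + 4 * ‖deriv h z₀‖ * η := by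
      intro z hz
      rw [hz₀, zero_add]
      exact re_le_of_forall_norm_deriv_le hh hz₀ hnear hz
    calc ‖deriv h z - deriv h z₀‖
        ≤ 96 * (4 * ‖deriv h z₀‖ * η) / (η / 2) ^ 2 * dist z z₀ :=
          norm_deriv_sub_le_of_re_le (by positivity) (by positivity) hh.differentiableOn hre
            (by linarith)
      _ = 1536 * (‖deriv h z₀‖ * (dist z z₀ / η)) := by field_simp; ring
      _ ≤ 2000 * (‖deriv h z₀‖ * (dist z z₀ / η)) := by gcongr; norm_num
      _ = ‖deriv h z₀‖ * (dist z z₀ / (10 * (η / 20000))) := by field_simp; ring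
  · rwa [mul_div_cancel₀ η (by norm_num)]

theorem frequently_exists_isAlmostAffineDisc (hh : Differentiable ℂ h) (hw₀ : deriv h w₀ ≠ 0)
    (hfreq : ∃ᶠ r : ℝ in atTop, ∃ w, ‖w‖ ≤ r ∧ r ^ σ ≤ (h w).re) :
    ∃ C > 0, ∃ᶠ r : ℝ in atTop, ∃ z₀ δ, IsAlmostAffineDisc h z₀ δ ∧ ‖z₀‖ + δ ≤ 4 * r ∧
      r ^ (1 + σ) ≤ C * (‖deriv h z₀‖ * δ ^ 2) := by
  obtain ⟨b, hb⟩ := exists_re_eq_zero_of_deriv_ne_zero hh hw₀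
  refine ⟨16 * 20000 ^ 2, by norm_num, ?_⟩
  refine (hfreq.and_eventually ((eventually_gt_atTop 0).and (eventually_ge_atTop ‖b‖))).mono ?_
  rintro r ⟨⟨w, hwr, hw⟩, hr, hbr⟩
  obtain ⟨z₀, δ, hdisc, hz₀r, hle⟩ :=
    exists_isAlmostAffineDisc hh hr hwr hbr ((Real.rpow_pos_of_pos hr _).trans_le hw) hb
  refine ⟨z₀, δ, hdisc, hz₀r, ?_⟩
  calc r ^ (1 + σ) = r * r ^ σ := by rw [Real.rpow_add hr, Real.rpow_one]
    _ ≤ r * (h w).re := by gcongr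
    _ ≤ 16 * (‖deriv h z₀‖ * (20000 * δ) ^ 2) := hle
    _ = 16 * 20000 ^ 2 * (‖deriv h z₀‖ * δ ^ 2) := by ring

end

section

open Metric Set

/-! ### The model equation -/

/-- `φ` is an entire function solving `φ⁽ᵏ⁾ = exp η * φ + 1` on the closed disc of radius `R` about
the origin. This is the rescaled form of `F⁽ᵏ⁾ = exp h * F + a`, where `η` is close to a translation
on a large disc. -/
structure IsModelSolution (k : ℕ) (R : ℝ) (φ η : ℂ → ℂ) : Prop where
  differentiable : Differentiable ℂ φ
  iteratedDeriv_eq : ∀ s ∈ closedBall (0 : ℂ) R,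
    iteratedDeriv k φ s = Complex.exp (η s) * φ s + 1

/-- `φ` is at most `exp b` on the part of the closed disc of radius `R` where the coefficient
`exp η` of the model equation has modulus at least one. -/
def IsBoundedOnRight (φ η : ℂ → ℂ) (R b : ℝ) : Prop :=
  ∀ s ∈ closedBall (0 : ℂ) R, 0 ≤ (η s).re → ‖φ s‖ ≤ Real.exp b

variable {φ η : ℂ → ℂ} {k : ℕ} {R b T : ℝ} {p q z : ℂ}

theorem IsModelSolution.mono (hφ : IsModelSolution k R φ η) {R' : ℝ} (hR : R' ≤ R) :
    IsModelSolution k R' φ η :=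
  ⟨hφ.differentiable, fun s hs => hφ.iteratedDeriv_eq s (closedBall_subset_closedBall hR hs)⟩

theorem IsBoundedOnRight.mono_radius (hb : IsBoundedOnRight φ η R b) {R' : ℝ} (hR : R' ≤ R) :
    IsBoundedOnRight φ η R' b :=
  fun s hs => hb s (closedBall_subset_closedBall hR hs)

theorem IsModelSolution.norm_sub_ofReal_le (hφ : IsModelSolution k R φ η) (hk : k ≠ 0) {l x B : ℝ}
    (hl : 0 < l) (hx : 0 ≤ x) (hB : ∀ z ∈ closedBall q l⁻¹, ‖φ z‖ ≤ B)
    (hseg : ∀ t ∈ Ico 0 x, q - (t : ℂ) ∈ closedBall (0 : ℂ) R)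
    (hre : ∀ t ∈ Ico 0 x, Real.exp (η (q - (t : ℂ))).re ≤ l ^ k) :
    ‖φ (q - x)‖ ≤ (k.factorial * B + 1 / l ^ k) * Real.exp (l * x) := by
  have hB₀ : 0 ≤ B := (norm_nonneg _).trans (hB q (mem_closedBall_self (by positivity)))
  have hline : ∀ t : ℝ, q + t * (-1) = q - t := fun t => by ring
  have hder (j : ℕ) (t : ℝ) : ‖iteratedDeriv j (fun t : ℝ => φ (q + t * (-1))) t‖
      = ‖iteratedDeriv j φ (q - t)‖ := by
    rw [iteratedDeriv_comp_add_ofReal_mul hφ.differentiable]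
    simp [← sub_eq_add_neg]
  have hcont : ContDiff ℝ k fun t : ℝ => φ (q + t * (-1)) :=
    (hφ.differentiable.contDiff.restrict_scalars ℝ).comp
      (contDiff_const.add (Complex.ofRealCLM.contDiff.mul contDiff_const))
  have hgronwall := norm_le_exp_of_norm_iteratedDeriv_le hk hcont hl zero_le_one hx
    (Y := k.factorial * B) (fun t ht => ?_) (fun j hj => ?_)
  · simpa only [hline] using hgronwall
  · rw [hder, hline, hφ.iteratedDeriv_eq _ (hseg t ht)]
    refine (norm_add_le _ _).trans ?_
    rw [norm_mul, Complex.norm_exp, norm_one]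
    gcongr
    exact hre t ht
  · have hcauchy := Complex.norm_iteratedDeriv_le_of_forall_mem_sphere_norm_le j (inv_pos.2 hl)
      hφ.differentiable.diffContOnCl fun z hz => hB z (sphere_subset_closedBall hz)
    rw [hder, Complex.ofReal_zero, sub_zero]
    refine hcauchy.trans ?_
    rw [inv_pow, div_inv_eq_mul, mul_comm]
    gcongr

theorem exists_mul_norm_le_re_I_pow_mul (s : ℂ) :
    ∃ j ∈ Finset.range 4, 7 / 10 * ‖s‖ ≤ (Complex.I ^ j * s).re := by
  have hsq : s.re ^ 2 + s.im ^ 2 = ‖s‖ ^ 2 := by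
    rw [Complex.sq_norm, Complex.normSq_apply]
    ring
  have hcases : 7 / 10 * ‖s‖ ≤ |s.re| ∨ 7 / 10 * ‖s‖ ≤ |s.im| := by
    by_contra! hlt
    nlinarith [sq_abs s.re, sq_abs s.im, abs_nonneg s.re, abs_nonneg s.im, norm_nonneg s]
  rcases hcases with h | h <;> rcases le_abs.1 h with h | h
  · exact ⟨0, by simp, by simpa using h⟩
  · exact ⟨2, by simp, by simpa using h⟩
  · exact ⟨3, by simp, by simpa [Complex.I_pow_three] using h⟩
  · exact ⟨1, by simp, by simpa using h⟩

-- Apply the maximum principle to the product of the four rotations of `φ` by right angles.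
theorem norm_pow_four_le_mul_pow_three (hφ : Differentiable ℂ φ) {ρ A B : ℝ} (hρ : 0 < ρ)
    (hB : ∀ z ∈ sphere p ρ, ‖φ z‖ ≤ B)
    (hA : ∀ z ∈ sphere p ρ, 7 / 10 * ρ ≤ (z - p).re → ‖φ z‖ ≤ A) :
    ‖φ p‖ ^ 4 ≤ A * B ^ 3 := by
  let P : ℂ → ℂ := fun s => ∏ j ∈ Finset.range 4, φ (p + Complex.I ^ j * s)
  have hP : Differentiable ℂ P :=
    Differentiable.fun_finsetProd fun j _ => hφ.comp (by fun_prop)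
  have hfrontier : ∀ s ∈ frontier (ball (0 : ℂ) ρ), ‖P s‖ ≤ A * B ^ 3 := by
    intro s hs
    rw [frontier_ball _ hρ.ne', mem_sphere_zero_iff_norm] at hs
    have hrot : ∀ j, p + Complex.I ^ j * s ∈ sphere p ρ := fun j => by simp [hs]
    obtain ⟨j, hj, hre⟩ := exists_mul_norm_le_re_I_pow_mul s
    have hAj : ‖φ (p + Complex.I ^ j * s)‖ ≤ A :=
      hA _ (hrot j) (by rwa [hs, ← add_sub_cancel_left p (_ * s)] at hre)
    rw [norm_prod, ← Finset.mul_prod_erase _ _ hj]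
    refine mul_le_mul hAj ?_ (by positivity) ((norm_nonneg _).trans hAj)
    calc ∏ i ∈ (Finset.range 4).erase j, ‖φ (p + Complex.I ^ i * s)‖
        ≤ ∏ _i ∈ (Finset.range 4).erase j, B :=
          Finset.prod_le_prod (fun _ _ => norm_nonneg _) fun i _ => hB _ (hrot i)
      _ = B ^ 3 := by
          rw [Finset.prod_const, Finset.card_erase_of_mem hj, Finset.card_range]
  have hmax := Complex.norm_le_of_forall_mem_frontier_norm_le isBounded_ball hP.diffContOnCl
    hfrontier (subset_closure (mem_ball_self hρ))
  simpa [P] using hmax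

section NearlyTranslation

variable {S : Set ℂ}

theorem abs_re_sub_sub_le (hη : LipschitzOnWith (1 / 10) (fun s => η s - s) S) (hp : p ∈ S)
    (hz : z ∈ S) : |(η z).re - (η p).re - (z - p).re| ≤ dist z p / 10 := by
  have hlip := hη.dist_le_mul z hz p hp
  rw [dist_eq_norm] at hlip
  calc |(η z).re - (η p).re - (z - p).re| = |((η z - z) - (η p - p)).re| := by
        simp only [Complex.sub_re]
        ring_nf
    _ ≤ ‖(η z - z) - (η p - p)‖ := Complex.abs_re_le_norm _
    _ ≤ dist z p / 10 := hlip.trans_eq (by push_cast; ring)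

theorem re_sub_two_le_re (hη : LipschitzOnWith (1 / 10) (fun s => η s - s) S) (hp : p ∈ S)
    (hz : z ∈ S) (hzp : z ∈ closedBall p 1) : (η p).re - 2 ≤ (η z).re := by
  rw [mem_closedBall] at hzp
  have hlip := abs_le.1 (abs_re_sub_sub_le hη hp hz)
  have hre := abs_le.1 ((Complex.abs_re_le_norm (z - p)).trans (dist_eq_norm z p ▸ hzp))
  linarith

theorem re_add_le_re_add_ofReal (hη : LipschitzOnWith (1 / 10) (fun s => η s - s) S) (hp : p ∈ S)
    {x : ℝ} (hx : 0 ≤ x) (hpx : p + x ∈ S) : (η p).re + 9 / 10 * x ≤ (η (p + x)).re := by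
  have hlip := abs_le.1 (abs_re_sub_sub_le hη hp hpx)
  rw [dist_self_add_left, Complex.norm_real, Real.norm_of_nonneg hx, add_sub_cancel_left,
    Complex.ofReal_re] at hlip
  linarith

theorem exists_re_add_ofReal_eq (hη : LipschitzOnWith (1 / 10) (fun s => η s - s) S) {D c : ℝ}
    (hD : 0 ≤ D) (hseg : ∀ x ∈ Icc 0 D, p + (x : ℂ) ∈ S) (hpc : (η p).re ≤ c)
    (hcD : c ≤ (η p).re + 9 / 10 * D) : ∃ x ∈ Icc 0 D, (η (p + x)).re = c := by
  have hcont : ContinuousOn η S :=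
    (hη.continuousOn.add continuousOn_id).congr fun s _ => (sub_add_cancel (η s) s).symm
  have hline : ContinuousOn (fun x : ℝ => (η (p + x)).re) (Icc 0 D) :=
    Complex.continuous_re.comp_continuousOn (hcont.comp (by fun_prop) hseg)
  refine intermediate_value_Icc hD hline ⟨by simpa using hpc, hcD.trans ?_⟩
  exact re_add_le_re_add_ofReal hη (by simpa using hseg 0 ⟨le_rfl, hD⟩) hD (hseg D ⟨hD, le_rfl⟩)

end NearlyTranslation

theorem norm_le_one_of_le_re (hφ : IsModelSolution k R φ η)
    (hη : LipschitzOnWith (1 / 10) (fun s => η s - s) (closedBall 0 R))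
    (hb : IsBoundedOnRight φ η R b) {N : ℕ} (hbN : b ≤ N) (hT : 3 ≤ T)
    (hNT : 6 * k.factorial * (N : ℝ) ^ k ≤ Real.exp (T - 2)) (hp : ‖p‖ + 1 ≤ R)
    (hpT : T ≤ (η p).re) : ‖φ p‖ ≤ 1 := by
  by_contra! hlarge
  have hball : closedBall p 1 ⊆ closedBall 0 R :=
    closedBall_subset_closedBall' (by simpa [add_comm] using hp)
  have hre : ∀ z ∈ closedBall p 1, T - 2 ≤ (η z).re := fun z hz => by
    linarith [re_sub_two_le_re hη (hball (mem_closedBall_self zero_le_one)) (hball hz) hz]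
  have htwo : 2 * 1 ≤ Real.exp (T - 2) := by linarith [Real.add_one_le_exp (T - 2)]
  obtain ⟨q, hq, hpq⟩ := exists_exp_mul_norm_le_of_iteratedDeriv_eq hφ.differentiable one_pos
    (fun z hz => hφ.iteratedDeriv_eq z (hball hz))
    (fun z hz => by
      rw [Complex.norm_exp]
      exact Real.exp_le_exp.2 (hre z hz))
    (fun z _ => norm_one.le) (by simpa using hNT)
    (htwo.trans (le_mul_of_one_le_right (Real.exp_pos _).le hlarge.le))
  have hupper : ‖φ q‖ ≤ Real.exp N :=
    (hb q (hball hq) (by linarith [hre q hq])).trans (Real.exp_le_exp.2 hbN)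
  exact (hpq.trans hupper).not_gt (lt_mul_of_one_lt_right (Real.exp_pos _) hlarge)

theorem norm_sub_ofReal_le_exp_add (hφ : IsModelSolution k R φ η)
    (hη : LipschitzOnWith (1 / 10) (fun s => η s - s) (closedBall 0 R))
    (hb : IsBoundedOnRight φ η R b) (hk : k ≠ 0) (hb₀ : 0 ≤ b) {x : ℝ} (hx : 0 ≤ x)
    (hp : ‖p‖ + 1 ≤ R) (hseg : ∀ t ∈ Icc 0 x, p - (t : ℂ) ∈ closedBall (0 : ℂ) R)
    (hp₂ : (η p).re = 2) : ‖φ (p - x)‖ ≤ (k.factorial + 1) * Real.exp (b + 8 * x) := by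
  have hball : closedBall p 1 ⊆ closedBall 0 R :=
    closedBall_subset_closedBall' (by simpa [add_comm] using hp)
  have hpR : p ∈ closedBall 0 R := hball (mem_closedBall_self zero_le_one)
  have hstart : ∀ z ∈ closedBall p 8⁻¹, ‖φ z‖ ≤ Real.exp b := fun z hz => by
    have hz₁ := closedBall_subset_closedBall (by norm_num : (8 : ℝ)⁻¹ ≤ 1) hz
    exact hb z (hball hz₁) (by linarith [re_sub_two_le_re hη hpR (hball hz₁) hz₁])
  have hcoeff : ∀ t ∈ Ico 0 x, Real.exp (η (p - (t : ℂ))).re ≤ 8 ^ k := fun t ht => by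
    have hmono := re_add_le_re_add_ofReal hη (hseg t (Ico_subset_Icc_self ht)) ht.1
      (by rwa [sub_add_cancel])
    rw [sub_add_cancel, hp₂] at hmono
    calc Real.exp (η (p - (t : ℂ))).re ≤ Real.exp 1 ^ 2 := by
          rw [← Real.exp_nat_mul]
          exact Real.exp_le_exp.2 (by push_cast; linarith [ht.1])
      _ ≤ 8 := by nlinarith [Real.exp_one_lt_d9, Real.exp_pos 1]
      _ ≤ 8 ^ k := le_self_pow₀ (by norm_num) hk
  have hone : 1 / (8 : ℝ) ^ k ≤ Real.exp b :=
    (div_le_one_of_le₀ (one_le_pow₀ (by norm_num)) (by positivity)).trans (Real.one_le_exp hb₀)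
  calc ‖φ (p - x)‖ ≤ (k.factorial * Real.exp b + 1 / 8 ^ k) * Real.exp (8 * x) :=
        hφ.norm_sub_ofReal_le hk (by norm_num) hx hstart
          (fun t ht => hseg t (Ico_subset_Icc_self ht)) hcoeff
    _ ≤ (k.factorial * Real.exp b + Real.exp b) * Real.exp (8 * x) := by gcongr
    _ = (k.factorial + 1) * Real.exp (b + 8 * x) := by rw [Real.exp_add]; ring

theorem norm_le_exp_add_of_re_le_two (hφ : IsModelSolution k R φ η)
    (hη : LipschitzOnWith (1 / 10) (fun s => η s - s) (closedBall 0 R))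
    (hb : IsBoundedOnRight φ η R b) (hk : k ≠ 0) (hb₀ : 0 ≤ b) {D : ℝ} (hD : 0 ≤ D)
    (hq : ‖q‖ + D + 1 ≤ R) (hq₂ : (η q).re ≤ 2) (hqD : 2 ≤ (η q).re + 9 / 10 * D) :
    ‖φ q‖ ≤ (k.factorial + 1) * Real.exp (b + 8 * D) := by
  have hnorm : ∀ x ∈ Icc 0 D, ‖q + (x : ℂ)‖ + 1 ≤ R := fun x hx => by
    have hle := norm_add_le q x
    rw [Complex.norm_real, Real.norm_of_nonneg hx.1] at hle
    linarith [hx.2]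
  have hseg : ∀ x ∈ Icc 0 D, q + (x : ℂ) ∈ closedBall 0 R := fun x hx => by
    rw [mem_closedBall_zero_iff]
    linarith [hnorm x hx]
  obtain ⟨x, hx, hx₂⟩ := exists_re_add_ofReal_eq hη hD hseg hq₂ hqD
  have hleft := norm_sub_ofReal_le_exp_add hφ hη hb hk hb₀ hx.1 (hnorm x hx) (fun t ht => by
    rw [add_sub_assoc, ← Complex.ofReal_sub]
    exact hseg _ ⟨sub_nonneg.2 ht.2, by linarith [ht.1, hx.2]⟩) hx₂
  rw [add_sub_cancel_right] at hleft
  refine hleft.trans ?_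
  gcongr
  exact hx.2

theorem norm_le_exp_add_of_dist_le (hφ : IsModelSolution k R φ η)
    (hη : LipschitzOnWith (1 / 10) (fun s => η s - s) (closedBall 0 R))
    (hb : IsBoundedOnRight φ η R b) (hk : k ≠ 0) (hb₀ : 0 ≤ b) (hT : 24 ≤ T)
    (hTk : k.factorial + 1 ≤ Real.exp (T - 24)) (hp : ‖p‖ + 10 * T ≤ R) (hp₀ : 0 ≤ (η p).re)
    (hzp : dist z p ≤ 4 * T) : ‖φ z‖ ≤ Real.exp (b + 41 * T) := by
  have hz : ‖z‖ ≤ ‖p‖ + 4 * T := by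
    linarith [norm_le_norm_add_norm_sub' z p, dist_eq_norm z p]
  have hzR : z ∈ closedBall 0 R := by rw [mem_closedBall_zero_iff]; linarith
  rcases le_or_gt 0 (η z).re with hz₀ | hz₀
  · exact (hb z hzR hz₀).trans (Real.exp_le_exp.2 (by linarith))
  have hlip := abs_le.1 (abs_re_sub_sub_le hη (p := p)
    (by rw [mem_closedBall_zero_iff]; linarith) hzR)
  have hre := (abs_le.1 (Complex.abs_re_le_norm (z - p))).1
  rw [← dist_eq_norm] at hre
  calc ‖φ z‖ ≤ (k.factorial + 1) * Real.exp (b + 8 * (5 * T + 3)) :=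
        norm_le_exp_add_of_re_le_two hφ hη hb hk hb₀ (by linarith) (by linarith) (by linarith)
          (by linarith)
    _ ≤ Real.exp (T - 24) * Real.exp (b + 8 * (5 * T + 3)) := by gcongr
    _ = Real.exp (b + 41 * T) := by rw [← Real.exp_add]; ring_nf

theorem isBoundedOnRight_four_fifths (hφ : IsModelSolution k R φ η)
    (hη : LipschitzOnWith (1 / 10) (fun s => η s - s) (closedBall 0 R))
    (hb : IsBoundedOnRight φ η R b) (hk : k ≠ 0) (hT : 24 ≤ T)
    (hTk : k.factorial + 1 ≤ Real.exp (T - 24)) (hbT : 700 * T ≤ b)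
    (hNT : 6 * k.factorial * (b + 1) ^ k ≤ Real.exp (T - 2)) :
    IsBoundedOnRight φ η (R - 10 * T) (4 / 5 * b) := by
  intro p hp hp₀
  rw [mem_closedBall_zero_iff] at hp
  have hb₀ : 0 ≤ b := by linarith
  have hceil : 6 * k.factorial * (⌈b⌉₊ : ℝ) ^ k ≤ Real.exp (T - 2) :=
    le_trans (by gcongr; exact (Nat.ceil_lt_add_one hb₀).le) hNT
  have hright : ∀ z ∈ sphere p (4 * T), 7 / 10 * (4 * T) ≤ (z - p).re → ‖φ z‖ ≤ 1 := by
    intro z hz hre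
    rw [mem_sphere] at hz
    have hzR : ‖z‖ + 1 ≤ R := by
      linarith [norm_le_norm_add_norm_sub' z p, dist_eq_norm z p]
    have hlip := abs_le.1 (abs_re_sub_sub_le hη (p := p) (z := z)
      (by rw [mem_closedBall_zero_iff]; linarith) (by rw [mem_closedBall_zero_iff]; linarith))
    exact norm_le_one_of_le_re hφ hη hb (Nat.le_ceil b) (by linarith) hceil hzR (by linarith)
  have hmax := norm_pow_four_le_mul_pow_three hφ.differentiable (by linarith) (fun z hz =>
    norm_le_exp_add_of_dist_le hφ hη hb hk hb₀ hT hTk (by linarith) hp₀ (mem_sphere.1 hz).le)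
    hright
  refine le_of_pow_le_pow_left₀ four_ne_zero (Real.exp_pos _).le (hmax.trans ?_)
  rw [one_mul, ← Real.exp_nat_mul, ← Real.exp_nat_mul]
  exact Real.exp_le_exp.2 (by push_cast; linarith)

/-- `A` is so large compared with `k` that `isBoundedOnRight_four_fifths` can be applied repeatedly,
the bound decreasing geometrically down to `2800 * A`. -/
structure IsBootstrapScale (k : ℕ) (A : ℝ) : Prop where
  le : 24 ≤ A
  natCast_le : (k : ℝ) ≤ A
  factorial_add_one_le : k.factorial + 1 ≤ Real.exp (A - 24)
  factorial_mul_pow_le : 6 * k.factorial * (2801 * A) ^ k ≤ Real.exp (A - 2)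

theorem exists_isBootstrapScale (k : ℕ) : ∃ A, IsBootstrapScale k A := by
  have hexp : Tendsto (fun A : ℝ => Real.exp (A - 24)) atTop atTop :=
    Real.tendsto_exp_atTop.comp (tendsto_atTop_add_const_right _ _ tendsto_id)
  obtain ⟨A, hA, hkA, hfact, hpow⟩ := ((eventually_ge_atTop (24 : ℝ)).and
    ((eventually_ge_atTop (k : ℝ)).and ((hexp.eventually_ge_atTop (k.factorial + 1 : ℝ)).and
    ((Real.tendsto_exp_div_pow_atTop k).eventually_ge_atTop
      (6 * k.factorial * 2801 ^ k * Real.exp 2))))).exists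
  refine ⟨A, hA, hkA, hfact, ?_⟩
  rw [le_div_iff₀ (by positivity)] at hpow
  rw [Real.exp_sub, le_div_iff₀ (Real.exp_pos _), mul_pow]
  linarith

section BootstrapScale

variable {A : ℝ}

theorem IsBootstrapScale.factorial_mul_pow_le_exp_mul (hA : IsBootstrapScale k A) (m : ℕ) :
    6 * k.factorial * (2800 * A * (5 / 4) ^ m + 1) ^ k ≤ Real.exp (A * (m + 1) - 2) := by
  have hA₂₄ := hA.le
  have hpow : (5 / 4 : ℝ) ^ m ≤ Real.exp m := by
    rw [← Real.exp_one_pow]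
    gcongr
    linarith [Real.exp_one_gt_d9]
  calc 6 * (k.factorial : ℝ) * (2800 * A * (5 / 4) ^ m + 1) ^ k
      ≤ 6 * k.factorial * (2801 * A * (5 / 4) ^ m) ^ k := by
        gcongr
        nlinarith [one_le_pow₀ (n := m) (by norm_num : (1 : ℝ) ≤ 5 / 4)]
    _ = 6 * k.factorial * (2801 * A) ^ k * ((5 / 4) ^ m) ^ k := by
        rw [mul_pow _ ((5 / 4) ^ m)]
        ring
    _ ≤ Real.exp (A - 2) * Real.exp m ^ k := by
        gcongr
        exact hA.factorial_mul_pow_le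
    _ = Real.exp (A - 2 + k * m) := by rw [← Real.exp_nat_mul, ← Real.exp_add]
    _ ≤ Real.exp (A * (m + 1) - 2) := Real.exp_le_exp.2 (by nlinarith [hA.natCast_le])

theorem isBoundedOnRight_of_geometric (hA : IsBootstrapScale k A) (hk : k ≠ 0) (m : ℕ) {R : ℝ}
    (hφ : IsModelSolution k R φ η)
    (hη : LipschitzOnWith (1 / 10) (fun s => η s - s) (closedBall 0 R))
    (hb : IsBoundedOnRight φ η R (2800 * A * (5 / 4) ^ m)) :
    IsBoundedOnRight φ η (R - 10 * A * (m + 1) ^ 2) (2800 * A) := by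
  have hA₂₄ := hA.le
  induction m generalizing R with
  | zero => simpa using hb.mono_radius (by linarith)
  | succ m ih =>
    have hbernoulli := one_add_mul_le_pow (a := (1 / 4 : ℝ)) (by norm_num) (m + 1)
    norm_num at hbernoulli
    have hstep := isBoundedOnRight_four_fifths hφ hη hb hk (T := A * (m + 2)) (by nlinarith)
      (hA.factorial_add_one_le.trans (Real.exp_le_exp.2 (by nlinarith))) (by nlinarith)
      ((hA.factorial_mul_pow_le_exp_mul (m + 1)).trans_eq (by push_cast; ring_nf))
    have hgeom : 4 / 5 * (2800 * A * (5 / 4) ^ (m + 1)) = 2800 * A * (5 / 4 : ℝ) ^ m := by ring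
    rw [hgeom] at hstep
    have hshrink : R - 10 * (A * (m + 2)) ≤ R := by nlinarith
    refine (ih (hφ.mono hshrink) (hη.mono (closedBall_subset_closedBall hshrink))
      hstep).mono_radius ?_
    push_cast
    nlinarith

theorem isBoundedOnRight_half (hA : IsBootstrapScale k A) (hk : k ≠ 0) (hR : 320 * A ≤ R)
    (hφ : IsModelSolution k R φ η)
    (hη : LipschitzOnWith (1 / 10) (fun s => η s - s) (closedBall 0 R))
    (hgrowth : ∀ s ∈ closedBall (0 : ℂ) R, ‖φ s‖ ≤ Real.exp (Real.exp (√R / (80 * A)))) :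
    IsBoundedOnRight φ η (R / 2) (2800 * A) := by
  have hA₂₄ := hA.le
  have hR₀ : 0 ≤ R := by linarith
  set y := √R / (10 * A) with hy
  have hy₀ : 0 ≤ y := by positivity
  have hlower : y ≤ ⌈y⌉₊ := Nat.le_ceil y
  have hupper : (⌈y⌉₊ : ℝ) < y + 1 := Nat.ceil_lt_add_one hy₀
  have hbase : Real.exp (√R / (80 * A)) ≤ 2800 * A * (5 / 4) ^ ⌈y⌉₊ := by
    have heighth : Real.exp (1 / 8) ≤ 5 / 4 := by
      have hle := Real.one_sub_le_exp_neg (1 / 8)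
      rw [Real.exp_neg, le_inv_comm₀ (by norm_num) (Real.exp_pos _)] at hle
      exact hle.trans (by norm_num)
    calc Real.exp (√R / (80 * A)) ≤ Real.exp (⌈y⌉₊ * (1 / 8)) := by
          refine Real.exp_le_exp.2 ((mul_le_mul_of_nonneg_right hlower (by norm_num)).trans_eq' ?_)
          rw [hy]
          ring
      _ ≤ (5 / 4) ^ ⌈y⌉₊ := by rw [Real.exp_nat_mul]; gcongr
      _ ≤ 2800 * A * (5 / 4) ^ ⌈y⌉₊ := le_mul_of_one_le_left (by positivity) (by linarith)
  have hradius : R / 2 ≤ R - 10 * A * (⌈y⌉₊ + 1) ^ 2 := by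
    have hAy : 100 * A * (A * y ^ 2) = R := by
      rw [hy, div_pow, Real.sq_sqrt hR₀]
      field
    have hsq : ((⌈y⌉₊ : ℝ) + 1) ^ 2 ≤ 2 * y ^ 2 + 8 := by
      calc ((⌈y⌉₊ : ℝ) + 1) ^ 2 ≤ (y + 2) ^ 2 := by gcongr ?_ ^ 2; linarith
        _ ≤ 2 * y ^ 2 + 8 := by nlinarith [sq_nonneg (y - 2)]
    nlinarith [mul_nonneg (by linarith : 0 ≤ A) (sq_nonneg y)]
  exact (isBoundedOnRight_of_geometric hA hk ⌈y⌉₊ hφ hη fun s hs _ =>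
    (hgrowth s hs).trans (Real.exp_le_exp.2 hbase)).mono_radius hradius

end BootstrapScale

theorem exists_norm_le_exp_add_mul_norm (hk : k ≠ 0) :
    ∃ κ > 0, ∃ C > 0, ∃ R₀ > 0, ∀ φ η : ℂ → ℂ, ∀ R ≥ R₀, IsModelSolution k R φ η →
      LipschitzOnWith (1 / 10) (fun s => η s - s) (closedBall 0 R) → (η 0).re = 0 →
      (∀ s ∈ closedBall (0 : ℂ) R, ‖φ s‖ ≤ Real.exp (Real.exp (κ * √R))) →
      ∀ s ∈ closedBall (0 : ℂ) (R / 8), ‖φ s‖ ≤ Real.exp (C + 11 * ‖s‖) := by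
  obtain ⟨A, hA⟩ := exists_isBootstrapScale k
  have hA₂₄ := hA.le
  refine ⟨1 / (80 * A), by positivity, 2801 * A, by positivity, 320 * A, by positivity, ?_⟩
  intro φ η R hR hφ hη hη₀ hgrowth s hs
  rw [mem_closedBall_zero_iff] at hs
  have hsub : closedBall (0 : ℂ) (R / 2) ⊆ closedBall 0 R :=
    closedBall_subset_closedBall (by linarith)
  have hright : IsBoundedOnRight φ η (R / 2) (2800 * A) :=
    isBoundedOnRight_half hA hk hR hφ hη (by simpa only [one_div_mul_eq_div] using hgrowth)
  have hsR : s ∈ closedBall 0 (R / 2) := by rw [mem_closedBall_zero_iff]; linarith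
  rcases le_or_gt 0 (η s).re with hs₀ | hs₀
  · exact (hright s hsR hs₀).trans (Real.exp_le_exp.2 (by linarith [norm_nonneg s]))
  have hlip := abs_le.1 (abs_re_sub_sub_le (hη.mono hsub) (mem_closedBall_self (by linarith)) hsR)
  have hre := abs_le.1 (Complex.abs_re_le_norm s)
  rw [hη₀, dist_zero_right, sub_zero, sub_zero] at hlip
  calc ‖φ s‖ ≤ (k.factorial + 1) * Real.exp (2800 * A + 8 * (13 / 10 * ‖s‖ + 3)) :=
        norm_le_exp_add_of_re_le_two (hφ.mono (by linarith)) (hη.mono hsub) hright hk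
          (by positivity) (by positivity) (by linarith) (by linarith) (by linarith)
    _ ≤ Real.exp (A - 24) * Real.exp (2800 * A + 8 * (13 / 10 * ‖s‖ + 3)) := by
        gcongr
        exact hA.factorial_add_one_le
    _ = Real.exp (A - 24 + (2800 * A + 8 * (13 / 10 * ‖s‖ + 3))) := (Real.exp_add _ _).symm
    _ ≤ Real.exp (2801 * A + 11 * ‖s‖) := Real.exp_le_exp.2 (by linarith [norm_nonneg s])

end

section

open Metric Set

/-! ### Rigidity of the model equation -/

theorem eventually_const_mul_pow_le_exp (C : ℝ) (n : ℕ) {c : ℝ} (hc : 0 < c) :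
    ∀ᶠ x : ℝ in atTop, C * x ^ n ≤ Real.exp (c * x) := by
  have hlittle := ((isLittleO_pow_exp_pos_mul_atTop n hc).const_mul_left C).def one_pos
  filter_upwards [hlittle] with x hx
  rw [one_mul, Real.norm_of_nonneg (Real.exp_pos _).le] at hx
  exact (le_abs_self _).trans hx

theorem norm_exp_sub_exp_le_of_norm_sub_two_pi_le {a b : ℂ} {ε : ℝ} (hε : ε ≤ 1)
    (hab : ‖b - a - 2 * Real.pi * Complex.I‖ ≤ ε) :
    ‖Complex.exp b - Complex.exp a‖ ≤ 2 * ε * Real.exp a.re := by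
  have hfactor : Complex.exp b - Complex.exp a
      = Complex.exp a * (Complex.exp (b - a - 2 * Real.pi * Complex.I) - 1) := by
    rw [mul_sub, mul_one, ← Complex.exp_add, ← Complex.exp_periodic.sub_eq b]
    ring_nf
  rw [hfactor, norm_mul, Complex.norm_exp, mul_comm]
  gcongr
  exact (Complex.norm_exp_sub_one_le (hab.trans hε)).trans (by gcongr)

variable {φ η : ℂ → ℂ} {k m N : ℕ} {M Λ ε θ X B S : ℝ}

theorem abs_re_sub_re_le_of_norm_sub_sub_le {w s : ℂ} (h : ‖w - s - θ * Complex.I‖ ≤ ε) :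
    |w.re - s.re| ≤ ε := by
  simpa using (Complex.abs_re_le_norm (w - s - θ * Complex.I)).trans h

theorem norm_two_pi_I_le : ‖2 * Real.pi * Complex.I‖ ≤ 7 := by
  simp only [norm_mul, Complex.norm_I, Complex.norm_real, Real.norm_of_nonneg Real.pi_pos.le,
    Complex.norm_ofNat]
  linarith [Real.pi_lt_d2]

theorem IsModelSolution.iteratedDeriv_shift_sub_eq (hφ : IsModelSolution k S φ η) {s c : ℂ}
    (hs : s ∈ closedBall 0 S) (hsc : s + c ∈ closedBall 0 S) :
    iteratedDeriv k (fun s => φ (s + c) - φ s) s = Complex.exp (η s) * (φ (s + c) - φ s)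
      + (Complex.exp (η (s + c)) - Complex.exp (η s)) * φ (s + c) := by
  have hcont : ContDiff ℂ k φ := hφ.differentiable.contDiff
  have hshift : ContDiff ℂ k fun s => φ (s + c) := hcont.comp (by fun_prop)
  simp only [iteratedDeriv_fun_sub hshift.contDiffAt hcont.contDiffAt,
    iteratedDeriv_comp_add_const, hφ.iteratedDeriv_eq _ hsc, hφ.iteratedDeriv_eq _ hs]
  ring

theorem add_two_pi_I_mem_closedBall (hM : 10 ≤ M) {s : ℂ} (hs : s ∈ closedBall 0 (19 * M)) :
    s + 2 * Real.pi * Complex.I ∈ closedBall (0 : ℂ) (20 * M) := by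
  rw [mem_closedBall_zero_iff] at hs ⊢
  exact (norm_add_le _ _).trans (by linarith [norm_two_pi_I_le])

theorem norm_add_two_pi_I_sub_le (hM : 10 ≤ M)
    (hb : ∀ s ∈ closedBall (0 : ℂ) (20 * M), ‖φ s‖ ≤ Real.exp Λ) {s : ℂ}
    (hs : s ∈ closedBall 0 (19 * M)) :
    ‖φ (s + 2 * Real.pi * Complex.I) - φ s‖ ≤ 2 * Real.exp Λ := by
  have hs₂₀ := closedBall_subset_closedBall (by linarith : 19 * M ≤ 20 * M) hs
  linarith [norm_sub_le (φ (s + 2 * Real.pi * Complex.I)) (φ s), hb s hs₂₀,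
    hb _ (add_two_pi_I_mem_closedBall hM hs)]

theorem norm_exp_shift_sub_exp_mul_le (hM : 10 ≤ M)
    (hη : ∀ s ∈ closedBall (0 : ℂ) (20 * M), ‖η s - s - θ * Complex.I‖ ≤ ε)
    (hε : 4 * ε ≤ Real.exp (-(20 * M + 1 + N)))
    (hb : ∀ s ∈ closedBall (0 : ℂ) (20 * M), ‖φ s‖ ≤ Real.exp Λ) {s : ℂ}
    (hs : s ∈ closedBall 0 (19 * M)) :
    ‖(Complex.exp (η (s + 2 * Real.pi * Complex.I)) - Complex.exp (η s))
      * φ (s + 2 * Real.pi * Complex.I)‖ ≤ Real.exp (Λ - N) := by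
  have hs₂₀ := closedBall_subset_closedBall (by linarith : 19 * M ≤ 20 * M) hs
  have hsc := add_two_pi_I_mem_closedBall hM hs
  set c : ℂ := 2 * Real.pi * Complex.I
  have hε₁ : 4 * ε ≤ 1 := hε.trans (Real.exp_le_one_iff.2 (by linarith))
  have hperiod : ‖η (s + c) - η s - c‖ ≤ 2 * ε := by
    have hsub := norm_sub_le (η (s + c) - (s + c) - θ * Complex.I) (η s - s - θ * Complex.I)
    rw [show η (s + c) - (s + c) - θ * Complex.I - (η s - s - θ * Complex.I)
      = η (s + c) - η s - c by ring] at hsub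
    linarith [hη _ hsc, hη s hs₂₀]
  have hre : (η s).re ≤ 20 * M + 1 := by
    have hsub := abs_le.1 (abs_re_sub_re_le_of_norm_sub_sub_le (hη s hs₂₀))
    linarith [Complex.re_le_norm s, mem_closedBall_zero_iff.1 hs]
  have hε₀ : 0 ≤ ε := (norm_nonneg _).trans (hη s hs₂₀)
  rw [norm_mul]
  calc ‖Complex.exp (η (s + c)) - Complex.exp (η s)‖ * ‖φ (s + c)‖
      ≤ 2 * (2 * ε) * Real.exp (η s).re * Real.exp Λ := by
        gcongr
        exacts [norm_exp_sub_exp_le_of_norm_sub_two_pi_le (by linarith) hperiod, hb _ hsc]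
    _ ≤ Real.exp (-(20 * M + 1 + N)) * Real.exp (20 * M + 1) * Real.exp Λ := by
        gcongr
        linarith
    _ = Real.exp (Λ - N) := by
        rw [← Real.exp_add, ← Real.exp_add]
        ring_nf

theorem norm_add_two_pi_I_sub_le_of_mem_closedBall_ofReal (hφ : IsModelSolution k (20 * M) φ η)
    (hM : 10 ≤ M) (hη : ∀ s ∈ closedBall (0 : ℂ) (20 * M), ‖η s - s - θ * Complex.I‖ ≤ ε)
    (hε : 4 * ε ≤ Real.exp (-(20 * M + 1 + N)))
    (hb : ∀ s ∈ closedBall (0 : ℂ) (20 * M), ‖φ s‖ ≤ Real.exp Λ)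
    (hG : 6 * k.factorial * (N : ℝ) ^ k ≤ Real.exp (M - 3)) {p : ℂ}
    (hp : p ∈ closedBall (M : ℂ) 1) :
    ‖φ (p + 2 * Real.pi * Complex.I) - φ p‖ ≤ 2 * Real.exp (Λ - N) := by
  set D : ℂ → ℂ := fun s => φ (s + 2 * Real.pi * Complex.I) - φ s
  by_contra! hlarge
  have hdist : ∀ z ∈ closedBall p 1, ‖z - M‖ ≤ 2 := fun z hz => by
    rw [← dist_eq_norm]
    linarith [dist_triangle z p M, mem_closedBall.1 hp, mem_closedBall.1 hz]
  have hball : ∀ z ∈ closedBall p 1, z ∈ closedBall (0 : ℂ) (19 * M) := fun z hz => by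
    have hsub := norm_le_norm_add_norm_sub' z (M : ℂ)
    rw [Complex.norm_real, Real.norm_of_nonneg (by linarith)] at hsub
    rw [mem_closedBall_zero_iff]
    linarith [hdist z hz]
  have hball₂₀ : ∀ z ∈ closedBall p 1, z ∈ closedBall (0 : ℂ) (20 * M) := fun z hz =>
    closedBall_subset_closedBall (by linarith) (hball z hz)
  have hre : ∀ z ∈ closedBall p 1, M - 3 ≤ (η z).re := fun z hz => by
    have hε₁ : 4 * ε ≤ 1 :=
      hε.trans (Real.exp_le_one_iff.2 (by linarith [(Nat.cast_nonneg N : (0 : ℝ) ≤ N)]))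
    have hsub := abs_le.1 (abs_re_sub_re_le_of_norm_sub_sub_le (hη z (hball₂₀ z hz)))
    have hzM := abs_le.1 ((Complex.abs_re_le_norm _).trans (hdist z hz))
    rw [Complex.sub_re, Complex.ofReal_re] at hzM
    linarith
  have htwo : 2 ≤ Real.exp (M - 3) := by linarith [Real.add_one_le_exp (M - 3)]
  obtain ⟨q, hq, hpq⟩ := exists_exp_mul_norm_le_of_iteratedDeriv_eq (φ := D)
    ((hφ.differentiable.comp (by fun_prop)).sub hφ.differentiable) one_pos
    (fun z hz => hφ.iteratedDeriv_shift_sub_eq (hball₂₀ z hz)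
      (add_two_pi_I_mem_closedBall hM (hball z hz)))
    (fun z hz => by
      rw [Complex.norm_exp]
      exact Real.exp_le_exp.2 (hre z hz))
    (fun z hz => norm_exp_shift_sub_exp_mul_le hM hη hε hb (hball z hz)) (by simpa using hG)
    (by nlinarith [Real.exp_pos (Λ - N)])
  refine (hpq.trans (norm_add_two_pi_I_sub_le hM hb (hball q hq))).not_gt ?_
  calc 2 * Real.exp Λ = Real.exp N * (2 * Real.exp (Λ - N)) := by
        rw [mul_left_comm, ← Real.exp_add, add_sub_cancel]
    _ < Real.exp N * ‖D p‖ := mul_lt_mul_of_pos_left hlarge (Real.exp_pos _)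

theorem norm_add_two_pi_I_sub_le_max (hφ : IsModelSolution k (20 * M) φ η) (hM : 10 ≤ M)
    (hη : ∀ s ∈ closedBall (0 : ℂ) (20 * M), ‖η s - s - θ * Complex.I‖ ≤ ε)
    (hε : 4 * ε ≤ Real.exp (-(20 * M + 1 + N)))
    (hb : ∀ s ∈ closedBall (0 : ℂ) (20 * M), ‖φ s‖ ≤ Real.exp Λ) (hX : 0 ≤ X) (hXM : X + 1 ≤ M)
    (hG : 6 * k.factorial * (N : ℝ) ^ k ≤ Real.exp (M - 3)) {z : ℂ}
    (hz : z ∈ closedBall (-(X : ℂ)) 1) : ‖φ (z + 2 * Real.pi * Complex.I) - φ z‖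
      ≤ max (2 * Real.exp (Λ - N) * (2 * M) ^ m) (2 * Real.exp Λ * (1 / 3) ^ m) := by
  have hnorm : ‖(M : ℂ)‖ = M := by rw [Complex.norm_real, Real.norm_of_nonneg (by linarith)]
  have houter : sphere (M : ℂ) (6 * M) ⊆ closedBall 0 (19 * M) :=
    sphere_subset_closedBall.trans (closedBall_subset_closedBall' (by
      rw [dist_zero_right, hnorm]
      linarith))
  have hdist : dist z M ≤ 2 * M := by
    have hXM' : dist (-(X : ℂ)) M = X + M := by
      rw [dist_comm, dist_eq_norm, sub_neg_eq_add, ← Complex.ofReal_add, Complex.norm_real,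
        Real.norm_of_nonneg (by linarith), add_comm]
    linarith [dist_triangle z (-(X : ℂ)) M, mem_closedBall.1 hz]
  have hthree := norm_le_max_of_three_circles one_pos (by linarith) (by linarith)
    (((hφ.differentiable.comp (by fun_prop)).sub hφ.differentiable).diffContOnCl
      (s := ball (M : ℂ) (6 * M)))
    (fun p hp => norm_add_two_pi_I_sub_le_of_mem_closedBall_ofReal hφ hM hη hε hb hG hp)
    (fun s hs => norm_add_two_pi_I_sub_le hM hb (houter hs)) m hdist
  rwa [div_one, mul_div_mul_right _ _ (by linarith : M ≠ 0),
    show (2 : ℝ) / 6 = 1 / 3 by norm_num] at hthree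

theorem norm_add_ofReal_le {z : ℂ} {x b : ℝ} (hX : z.re = -X) (hb : |z.im| ≤ b) (hx : x ≤ X) :
    ‖z + (x : ℂ)‖ ≤ X - x + b := by
  have hre : (z + (x : ℂ)).re = -(X - x) := by simp [hX, sub_eq_neg_add]
  have him : (z + (x : ℂ)).im = z.im := by simp
  refine (Complex.norm_le_abs_re_add_abs_im _).trans ?_
  rw [hre, him, abs_neg, abs_of_nonneg (by linarith)]
  linarith

theorem norm_exp_mul_le_half (hφ : IsModelSolution k S φ η) (hk : k ≠ 0) (hε : ε ≤ 1)
    (hη : ∀ s ∈ closedBall (0 : ℂ) S, ‖η s - s - θ * Complex.I‖ ≤ ε)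
    (hB : ∀ s ∈ closedBall (0 : ℂ) (k + 10), ‖φ s‖ ≤ B) (hX : k + 1 ≤ X) (hXS : X + 7 ≤ S)
    (hXB : (k.factorial * B + 2 ^ k) * Real.exp (1 - X / 2) ≤ 1 / 2) {z : ℂ} (hz : z.re = -X)
    (hz₇ : |z.im| ≤ 7) : ‖Complex.exp (η z) * φ z‖ ≤ 1 / 2 := by
  have hnorm : ∀ x ∈ Icc 0 X, ‖z + (x : ℂ)‖ ≤ X - x + 7 := fun x hx =>
    norm_add_ofReal_le hz hz₇ hx.2
  have hre : ∀ x ∈ Icc 0 X, (η (z + (x : ℂ))).re ≤ x - X + 1 := fun x hx => by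
    have hsub := abs_le.1 (abs_re_sub_re_le_of_norm_sub_sub_le
      (hη (z + x) (mem_closedBall_zero_iff.2 (by linarith [hnorm x hx, hx.1]))))
    simp only [Complex.add_re, hz, Complex.ofReal_re] at hsub
    linarith
  set x := X - (k + 1)
  have hx₀ : 0 ≤ x := sub_nonneg.2 hX
  have hshift : ∀ t : ℝ, z + (x : ℂ) - t = z + ((x - t : ℝ) : ℂ) := fun t => by push_cast; ring
  have hmem : ∀ t ∈ Ico 0 x, x - t ∈ Icc 0 X := fun t ht =>
    ⟨by linarith [ht.2], by linarith [ht.1]⟩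
  have hleft := hφ.norm_sub_ofReal_le hk (q := z + x) (l := 1 / 2) (by norm_num) hx₀
    (fun w hw => hB w (closedBall_subset_closedBall' (by
      rw [dist_zero_right, one_div, inv_inv]
      linarith [hnorm x ⟨hx₀, by linarith⟩]) hw))
    (fun t ht => by
      rw [hshift, mem_closedBall_zero_iff]
      linarith [hnorm _ (hmem t ht), (hmem t ht).1])
    (fun t ht => by
      rw [hshift, ← Real.exp_log (by norm_num : (0 : ℝ) < 1 / 2), ← Real.exp_nat_mul, one_div,
        Real.log_inv]
      refine Real.exp_le_exp.2 ?_
      nlinarith [hre _ (hmem t ht), Real.log_two_lt_d9, ht.1])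
  rw [add_sub_cancel_right, one_div_pow, one_div_one_div] at hleft
  rw [norm_mul, Complex.norm_exp]
  calc Real.exp (η z).re * ‖φ z‖
      ≤ Real.exp (1 - X) * ((k.factorial * B + 2 ^ k) * Real.exp (1 / 2 * x)) := by
        gcongr
        simpa using (hre 0 ⟨le_rfl, by linarith⟩).trans_eq (by ring)
    _ = (k.factorial * B + 2 ^ k) * Real.exp (1 - X + 1 / 2 * x) := by rw [Real.exp_add]; ring
    _ ≤ (k.factorial * B + 2 ^ k) * Real.exp (1 - X / 2) := by
        have hB₀ : 0 ≤ B := (norm_nonneg _).trans (hB 0 (mem_closedBall_self (by linarith)))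
        gcongr
        linarith
    _ ≤ 1 / 2 := hXB

theorem half_norm_sub_le_norm_sub_of_norm_deriv_sub_one_le {g : ℂ → ℂ} (hg : Differentiable ℂ g)
    {p q : ℂ} (hderiv : ∀ z ∈ segment ℝ p q, ‖deriv g z - 1‖ ≤ 1 / 2) :
    ‖q - p‖ / 2 ≤ ‖g q - g p‖ := by
  have hmean := (convex_segment p q).norm_image_sub_le_of_norm_hasDerivWithin_le
    (fun z _ => ((hg z).hasDerivAt.sub (hasDerivAt_id z)).hasDerivWithinAt) hderiv
    (left_mem_segment ℝ p q) (right_mem_segment ℝ p q)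
  simp only [Pi.sub_apply, id_eq] at hmean
  rw [sub_sub_sub_comm, norm_sub_rev] at hmean
  linarith [norm_sub_norm_le (q - p) (g q - g p)]

theorem pi_le_norm_iteratedDeriv_sub (hφ : IsModelSolution k S φ η) (hk : k ≠ 0) (hε : ε ≤ 1)
    (hη : ∀ s ∈ closedBall (0 : ℂ) S, ‖η s - s - θ * Complex.I‖ ≤ ε)
    (hB : ∀ s ∈ closedBall (0 : ℂ) (k + 10), ‖φ s‖ ≤ B) (hX : k + 1 ≤ X) (hXS : X + 7 ≤ S)
    (hXB : (k.factorial * B + 2 ^ k) * Real.exp (1 - X / 2) ≤ 1 / 2) :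
    Real.pi ≤ ‖iteratedDeriv (k - 1) φ (-(X : ℂ) + 2 * Real.pi * Complex.I)
      - iteratedDeriv (k - 1) φ (-(X : ℂ))‖ := by
  have hX₀ : 0 ≤ X := by linarith [(Nat.cast_nonneg k : (0 : ℝ) ≤ k)]
  have hderiv (z : ℂ) : HasDerivAt (iteratedDeriv (k - 1) φ) (iteratedDeriv k φ z) z := by
    simpa [Nat.sub_add_cancel (Nat.one_le_iff_ne_zero.2 hk)] using
      hasDerivAt_iteratedDeriv hφ.differentiable (k - 1) z
  have hdrift := half_norm_sub_le_norm_sub_of_norm_deriv_sub_one_le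
    (fun z => (hderiv z).differentiableAt) (p := -(X : ℂ))
    (q := -(X : ℂ) + 2 * Real.pi * Complex.I) fun z hz => by
      obtain ⟨t, ⟨ht₀, ht₁⟩, rfl⟩ := (segment_eq_image' ℝ _ _).subset hz
      have hre : (-(X : ℂ) + t • (-(X : ℂ) + 2 * Real.pi * Complex.I - -(X : ℂ))).re = -X := by
        simp
      have him : |(-(X : ℂ) + t • (-(X : ℂ) + 2 * Real.pi * Complex.I - -(X : ℂ))).im| ≤ 7 := by
        have hval : (-(X : ℂ) + t • (-(X : ℂ) + 2 * Real.pi * Complex.I - -(X : ℂ))).im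
            = t * (2 * Real.pi) := by simp
        rw [hval, abs_of_nonneg (by positivity)]
        nlinarith [Real.pi_lt_d2, Real.pi_pos]
      have hnorm := Complex.norm_le_abs_re_add_abs_im
        (-(X : ℂ) + t • (-(X : ℂ) + 2 * Real.pi * Complex.I - -(X : ℂ)))
      rw [hre, abs_neg, abs_of_nonneg hX₀] at hnorm
      rw [(hderiv _).deriv, hφ.iteratedDeriv_eq _ (mem_closedBall_zero_iff.2 (by linarith)),
        add_sub_cancel_right]
      exact norm_exp_mul_le_half hφ hk hε hη hB hX hXS hXB hre him
  simpa [abs_of_pos Real.pi_pos] using hdrift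

theorem norm_iteratedDeriv_sub_le_one_of_norm_shift_sub_le {p c : ℂ} (hφ : Differentiable ℂ φ)
    (hshift : ∀ z ∈ closedBall p 1, ‖φ (z + c) - φ z‖ ≤ 1 / k.factorial) :
    ‖iteratedDeriv (k - 1) φ (p + c) - iteratedDeriv (k - 1) φ p‖ ≤ 1 := by
  have hcauchy := Complex.norm_iteratedDeriv_le_of_forall_mem_sphere_norm_le (k - 1) one_pos
    ((hφ.comp (by fun_prop)).sub hφ).diffContOnCl
    (fun z hz => hshift z (sphere_subset_closedBall hz))
  have hcont : ContDiff ℂ (k - 1 : ℕ) φ := hφ.contDiff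
  have hcont' : ContDiff ℂ (k - 1 : ℕ) fun z => φ (z + c) := hcont.comp (by fun_prop)
  rw [one_pow, div_one, mul_one_div] at hcauchy
  refine le_trans (le_of_eq ?_) (hcauchy.trans (div_le_one_of_le₀ ?_ (by positivity)))
  · change _ = ‖iteratedDeriv (k - 1) (fun z => φ (z + c) - φ z) p‖
    simp only [iteratedDeriv_fun_sub hcont'.contDiffAt hcont.contDiffAt,
      iteratedDeriv_comp_add_const]
  · exact_mod_cast Nat.factorial_le (Nat.sub_le k 1)

theorem exp_sub_mul_pow_le {u K : ℝ} (hM : 0 ≤ M) (hN : u + K + 2 * M * m ≤ N) :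
    Real.exp (u - N) * (2 * M) ^ m ≤ Real.exp (-K) := by
  calc Real.exp (u - N) * (2 * M) ^ m ≤ Real.exp (u - N) * Real.exp (2 * M) ^ m := by
        gcongr
        linarith [Real.add_one_le_exp (2 * M)]
    _ = Real.exp (u - N + m * (2 * M)) := by rw [← Real.exp_nat_mul, ← Real.exp_add]
    _ ≤ Real.exp (-K) := Real.exp_le_exp.2 (by linarith)

theorem exp_mul_one_third_pow_le {u K : ℝ} (hm : u + K ≤ m) :
    Real.exp u * (1 / 3) ^ m ≤ Real.exp (-K) := by
  have hthird : (1 / 3 : ℝ) ≤ Real.exp (-1) := by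
    rw [Real.exp_neg, ← one_div]
    exact one_div_le_one_div_of_le (Real.exp_pos 1) (by linarith [Real.exp_one_lt_d9])
  calc Real.exp u * (1 / 3) ^ m ≤ Real.exp u * Real.exp (-1) ^ m := by gcongr
    _ = Real.exp (u + m * -1) := by rw [← Real.exp_nat_mul, ← Real.exp_add]
    _ ≤ Real.exp (-K) := Real.exp_le_exp.2 (by linarith)

theorem exists_nat_le_and_le_and_le_mul_self {u K : ℝ} (hK : 0 ≤ K) (hu : 1 ≤ u) (hM : 1 ≤ M)
    (hMu : 3 * (K + 2) * M ≤ u) :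
    ∃ m N : ℕ, u + K ≤ m ∧ u + K + 2 * M * m ≤ N ∧ (N : ℝ) ≤ u * u := by
  refine ⟨⌈u + K⌉₊, ⌈u + K + 2 * M * ⌈u + K⌉₊⌉₊, Nat.le_ceil _, Nat.le_ceil _, ?_⟩
  calc (⌈u + K + 2 * M * ⌈u + K⌉₊⌉₊ : ℝ) ≤ u + K + 2 * M * ⌈u + K⌉₊ + 1 :=
        (Nat.ceil_lt_add_one (by positivity)).le
    _ ≤ u + K + 2 * M * (u + K + 1) + 1 := by
        gcongr
        exact (Nat.ceil_lt_add_one (by positivity)).le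
    _ ≤ u * (K + 2) * (3 * M) := by nlinarith [mul_nonneg hK (sub_nonneg.2 hu)]
    _ ≤ u * u := by nlinarith

theorem eventually_exists_rigidity_exponents (hk : k ≠ 0) : ∀ᶠ M : ℝ in atTop, ∃ m N : ℕ,
    6 * k.factorial * (N : ℝ) ^ k ≤ Real.exp (M - 3) ∧
    2 * Real.exp (Real.exp (1 / (4 * k) * M) - N) * (2 * M) ^ m ≤ 1 / k.factorial ∧
    2 * Real.exp (Real.exp (1 / (4 * k) * M)) * (1 / 3) ^ m ≤ 1 / k.factorial := by
  set K : ℝ := Real.log (2 * k.factorial) with hK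
  have hfact : (1 : ℝ) ≤ k.factorial := by exact_mod_cast k.factorial_pos
  have hexpK : 1 / (k.factorial : ℝ) = 2 * Real.exp (-K) := by
    rw [hK, Real.exp_neg, Real.exp_log (by positivity)]
    field
  filter_upwards [eventually_ge_atTop 1,
    eventually_const_mul_pow_le_exp (3 * (K + 2)) 1 (by positivity : 0 < 1 / (4 * (k : ℝ))),
    eventually_const_mul_pow_le_exp (6 * k.factorial * Real.exp 3) 0 (one_half_pos (α := ℝ))]
    with M hM hMu hMG
  rw [pow_one] at hMu
  rw [pow_zero, mul_one] at hMG
  obtain ⟨m, N, hm, hN, hN'⟩ := exists_nat_le_and_le_and_le_mul_self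
    (Real.log_nonneg (by linarith)) (Real.one_le_exp (by positivity)) hM hMu
  refine ⟨m, N, ?_, ?_, ?_⟩
  · have hsq : (Real.exp (1 / (4 * k) * M) * Real.exp (1 / (4 * k) * M)) ^ k
        = Real.exp (1 / 2 * M) := by
      rw [← Real.exp_add, ← Real.exp_nat_mul]
      congr 1
      field
    calc 6 * k.factorial * (N : ℝ) ^ k ≤ 6 * k.factorial * Real.exp (1 / 2 * M) := by
          rw [← hsq]
          gcongr
      _ = 6 * k.factorial * Real.exp 3 * (Real.exp (1 / 2 * M) * Real.exp (-3)) := by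
          rw [Real.exp_neg]
          field
      _ ≤ Real.exp (1 / 2 * M) * (Real.exp (1 / 2 * M) * Real.exp (-3)) := by gcongr
      _ = Real.exp (M - 3) := by
          rw [← Real.exp_add, ← Real.exp_add]
          ring_nf
  · rw [hexpK, mul_assoc]
    gcongr
    exact exp_sub_mul_pow_le (by linarith) hN
  · rw [hexpK, mul_assoc]
    gcongr
    exact exp_mul_one_third_pow_le hm

theorem exists_forall_isModelSolution_exists_lt_norm (hk : k ≠ 0) {Λ : ℝ → ℝ}
    (hΛ_mono : Monotone Λ)
    (hΛ : ∀ᶠ M : ℝ in atTop, Λ (20 * M) ≤ Real.exp (1 / (4 * k) * M)) :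
    ∃ M > 0, ∃ ε > 0, ∀ φ η : ℂ → ℂ, ∀ θ : ℝ, IsModelSolution k (20 * M) φ η →
      (∀ s ∈ closedBall (0 : ℂ) (20 * M), ‖η s - s - θ * Complex.I‖ ≤ ε) →
      ∃ s ∈ closedBall (0 : ℂ) (20 * M), Real.exp (Λ ‖s‖) < ‖φ s‖ := by
  set B := Real.exp (Λ (k + 10))
  obtain ⟨X, hX, hXB⟩ : ∃ X : ℝ, k + 1 ≤ X ∧
      (k.factorial * B + 2 ^ k) * Real.exp (1 - X / 2) ≤ 1 / 2 := by
    have hdecay := (Real.tendsto_exp_atBot.comp (tendsto_atBot_add_const_left _ 1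
      (tendsto_neg_atTop_atBot.comp (tendsto_id.atTop_div_const (two_pos (α := ℝ)))))).const_mul
      (k.factorial * B + 2 ^ k)
    rw [mul_zero] at hdecay
    exact ((eventually_ge_atTop _).and (hdecay.eventually_le_const one_half_pos)).exists
  obtain ⟨M, hM, hXM, hΛM, m, N, hG, hm, hm'⟩ := ((eventually_ge_atTop (10 : ℝ)).and
    ((eventually_ge_atTop (X + 7)).and
    (hΛ.and (eventually_exists_rigidity_exponents hk)))).exists
  refine ⟨M, by linarith, Real.exp (-(20 * M + 1 + N)) / 4, by positivity, ?_⟩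
  intro φ η θ hφ hη
  by_contra! hb
  have hbΛ : ∀ {S : ℝ}, S ≤ 20 * M → ∀ s ∈ closedBall (0 : ℂ) S, ‖φ s‖ ≤ Real.exp (Λ S) :=
    fun hS s hs => (hb s (closedBall_subset_closedBall hS hs)).trans
      (Real.exp_le_exp.2 (hΛ_mono (mem_closedBall_zero_iff.1 hs)))
  have hε : Real.exp (-(20 * M + 1 + N)) ≤ 1 :=
    Real.exp_le_one_iff.2 (by linarith [(Nat.cast_nonneg N : (0 : ℝ) ≤ N)])
  have hlower := pi_le_norm_iteratedDeriv_sub hφ hk (by linarith) hη (hbΛ (by linarith)) hX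
    (by linarith) hXB
  have hupper := norm_iteratedDeriv_sub_le_one_of_norm_shift_sub_le (k := k) (p := -(X : ℂ))
    (c := 2 * Real.pi * Complex.I) hφ.differentiable fun z hz =>
      (norm_add_two_pi_I_sub_le_max hφ hM hη (by linarith)
        (fun s hs => (hbΛ le_rfl s hs).trans (Real.exp_le_exp.2 hΛM)) (by linarith) (by linarith)
        hG hz).trans (max_le hm hm')
  linarith [Real.pi_gt_three]

theorem exists_forall_not_isModelSolution (hk : k ≠ 0) :
    ∃ κ > 0, ∃ M > 0, ∃ ε > 0, ∃ R₀ > 0, ∀ φ η : ℂ → ℂ, ∀ R ≥ R₀,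
      LipschitzOnWith (1 / 10) (fun s => η s - s) (closedBall 0 R) → (η 0).re = 0 →
      (∀ s ∈ closedBall (0 : ℂ) M, ‖η s - s - (η 0).im * Complex.I‖ ≤ ε) →
      (∀ s ∈ closedBall (0 : ℂ) R, ‖φ s‖ ≤ Real.exp (Real.exp (κ * √R))) →
      ¬ IsModelSolution k R φ η := by
  obtain ⟨κ, hκ, C, hC, R₀, hR₀, hgrowth⟩ := exists_norm_le_exp_add_mul_norm hk
  obtain ⟨M, hM, ε, hε, hrigid⟩ :=
    exists_forall_isModelSolution_exists_lt_norm (k := k) (Λ := fun x => C + 11 * x) hk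
      (fun x y hxy => by beta_reduce; gcongr) (by
        filter_upwards [eventually_ge_atTop 1, eventually_const_mul_pow_le_exp (C + 220) 1
          (by positivity : 0 < 1 / (4 * (k : ℝ)))] with M hM hMexp
        nlinarith)
  refine ⟨κ, hκ, 20 * M, by linarith, ε, hε, max R₀ (160 * M), lt_max_of_lt_left hR₀, ?_⟩
  intro φ η R hR hlip hη₀ hη hb hφ
  have hRM : 160 * M ≤ R := (le_max_right _ _).trans hR
  obtain ⟨s, hs, hlt⟩ := hrigid φ η _ (hφ.mono (by linarith)) hη
  exact hlt.not_ge (hgrowth φ η R ((le_max_left _ _).trans hR) hφ hlip hη₀ hb s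
    (closedBall_subset_closedBall (by linarith) hs))

end

/-! ### Shared values and hyper-order -/

section SharedValues

open Metric Set Topology

theorem exists_eq_mul_of_analyticOrderAt_eq {F G : ℂ → ℂ} (hF : Differentiable ℂ F)
    (hG : Differentiable ℂ G) (htop : ∀ z, analyticOrderAt F z ≠ ⊤)
    (hord : ∀ z, analyticOrderAt G z = analyticOrderAt F z) :
    ∃ q : ℂ → ℂ, Differentiable ℂ q ∧ (∀ z, q z ≠ 0) ∧ G = q * F := by
  have hmero : MeromorphicOn (G / F) univ :=
    fun z _ => (hG.analyticAt z).meromorphicAt.div (hF.analyticAt z).meromorphicAt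
  set q := toMeromorphicNFOn (G / F) univ with hq
  have hnf : ∀ z, MeromorphicNFAt q z := fun z => meromorphicNFOn_toMeromorphicNFOn _ _ (mem_univ z)
  have horder : ∀ z, meromorphicOrderAt q z = 0 := fun z => by
    obtain ⟨n, hn⟩ := ENat.ne_top_iff_exists.1 (htop z)
    rw [hq, meromorphicOrderAt_toMeromorphicNFOn hmero (mem_univ z),
      meromorphicOrderAt_div (hG.analyticAt z).meromorphicAt (hF.analyticAt z).meromorphicAt,
      (hG.analyticAt z).meromorphicOrderAt_eq, (hF.analyticAt z).meromorphicOrderAt_eq, hord, ← hn,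
      ENat.map_natCast]
    exact LinearOrderedAddCommGroupWithTop.sub_self_eq_zero_of_ne_top WithTop.coe_ne_top
  have hqd : Differentiable ℂ q := fun z =>
    ((hnf z).meromorphicOrderAt_nonneg_iff_analyticAt.1 (horder z).ge).differentiableAt
  refine ⟨q, hqd, fun z => (hnf z).meromorphicOrderAt_eq_zero_iff.1 (horder z), funext fun z => ?_⟩
  have hFne : ∀ᶠ w in 𝓝[≠] z, F w ≠ 0 :=
    (hF.analyticAt z).eventually_eq_zero_or_eventually_ne_zero.resolve_left
      fun h => htop z (analyticOrderAt_eq_top.2 h)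
  have hpunctured : G =ᶠ[𝓝[≠] z] q * F := by
    filter_upwards [hmero.toMeromorphicNFOn_eq_self_on_nhdsNE (mem_univ z), hFne] with w hw hFw
    rw [Pi.mul_apply, hq, hw, Pi.div_apply, div_mul_cancel₀ _ hFw]
  exact tendsto_nhds_unique_of_eventuallyEq
    (hG.continuous.continuousAt.tendsto.mono_left nhdsWithin_le_nhds)
    ((hqd.mul hF).continuous.continuousAt.tendsto.mono_left nhdsWithin_le_nhds) hpunctured

theorem exists_eq_exp_of_forall_ne_zero {q : ℂ → ℂ} (hq : Differentiable ℂ q)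
    (hne : ∀ z, q z ≠ 0) : ∃ h : ℂ → ℂ, Differentiable ℂ h ∧ ∀ z, q z = Complex.exp (h z) := by
  obtain ⟨h, hh0, hh⟩ := ((hq.contDiff (n := 2)).differentiable_deriv_two.div hq
    hne).isExactOn_univ.with_val_at 0 (Complex.log (q 0))
  have hderiv : ∀ z, HasDerivAt (fun z => q z * Complex.exp (-h z)) 0 z := fun z => by
    refine ((hq z).hasDerivAt.mul (hh z (mem_univ z)).neg.cexp).congr_deriv ?_
    rw [Pi.div_apply]
    field_simp [hne z]
    ring
  refine ⟨h, fun z => (hh z (mem_univ z)).differentiableAt, fun z => ?_⟩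
  have hconst : q z * Complex.exp (-h z) = q 0 * Complex.exp (-h 0) :=
    is_const_of_deriv_eq_zero (fun z => (hderiv z).differentiableAt)
      (fun z => (hderiv z).deriv) z 0
  rwa [hh0, Complex.exp_neg, Complex.exp_neg, Complex.exp_log (hne 0), mul_inv_cancel₀ (hne 0),
    mul_inv_eq_one₀ (Complex.exp_ne_zero _)] at hconst

theorem vanishesToOrder_iff_analyticOrderAt_eq {F : ℂ → ℂ} {z : ℂ} (hF : AnalyticAt ℂ F z)
    {n : ℕ} : VanishesToOrder F z n ↔ analyticOrderAt F z = n :=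
  (analyticOrderAt_eq_nat_iff_iteratedDeriv_eq_zero hF).symm

theorem exists_eq_exp_mul_of_vanishesToOrder_iff {F G : ℂ → ℂ} (hF : Differentiable ℂ F)
    (hG : Differentiable ℂ G) {z₀ : ℂ} (hz₀ : F z₀ ≠ 0)
    (hFG : ∀ z n, VanishesToOrder F z n ↔ VanishesToOrder G z n) :
    ∃ h : ℂ → ℂ, Differentiable ℂ h ∧ ∀ z, G z = Complex.exp (h z) * F z := by
  have htop : ∀ z, analyticOrderAt F z ≠ ⊤ := fun z =>
    AnalyticOnNhd.analyticOrderAt_ne_top_of_isPreconnected (U := univ)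
      (fun z _ => hF.analyticAt z) isPreconnected_univ (mem_univ z₀) (mem_univ z)
      (by rw [(hF.analyticAt z₀).analyticOrderAt_eq_zero.2 hz₀]; exact ENat.zero_ne_top)
  have hord : ∀ z, analyticOrderAt G z = analyticOrderAt F z := fun z => by
    obtain ⟨n, hn⟩ := ENat.ne_top_iff_exists.1 (htop z)
    rw [← hn, ← vanishesToOrder_iff_analyticOrderAt_eq (hG.analyticAt z), ← hFG,
      vanishesToOrder_iff_analyticOrderAt_eq (hF.analyticAt z), hn]
  obtain ⟨q, hq, hne, hmul⟩ := exists_eq_mul_of_analyticOrderAt_eq hF hG htop hord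
  obtain ⟨h, hh, hexp⟩ := exists_eq_exp_of_forall_ne_zero hq hne
  exact ⟨h, hh, fun z => by rw [hmul, Pi.mul_apply, hexp]⟩

end SharedValues

section DoubleExponentialGrowth

open Metric Set

/-- The growth condition `log log M(r, F) ≤ r ^ ρ` for all large `r`, where `M(r, F)` is the maximum
of `‖F‖` on the closed disc of radius `r`. It follows from a bound on the hyper-order, and is the
only form in which the hyper-order enters the argument. -/
def DoubleExpGrowth (ρ : ℝ) (F : ℂ → ℂ) : Prop :=
  ∀ᶠ r : ℝ in atTop, ∀ z ∈ closedBall (0 : ℂ) r, ‖F z‖ ≤ Real.exp (Real.exp (r ^ ρ))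

theorem le_exp_of_logPlus_le {x y : ℝ} (h : logPlus x ≤ y) : x ≤ Real.exp y :=
  (le_max_right 1 x).trans ((Real.log_le_iff_le_exp (one_pos.trans_le (le_max_left 1 x))).1 h)

theorem norm_le_maxMod {f : ℂ → ℂ} (hf : Differentiable ℂ f) {r : ℝ} (hr : r ≠ 0) {z : ℂ}
    (hz : z ∈ closedBall 0 r) : ‖f z‖ ≤ maxMod f r := by
  refine Complex.norm_le_of_forall_mem_frontier_norm_le isBounded_ball hf.diffContOnCl
    (fun w hw => ?_) (by rwa [closure_ball _ hr])
  rw [frontier_ball _ hr] at hw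
  exact le_csSup ((isCompact_sphere _ _).image hf.continuous.norm).bddAbove (mem_image_of_mem _ hw)

theorem exists_doubleExpGrowth_of_hyperOrder_lt_one {f : ℂ → ℂ} (hf : Differentiable ℂ f)
    (hρ : hyperOrder f < 1) : ∃ ρ, 0 ≤ ρ ∧ ρ < 1 ∧ DoubleExpGrowth ρ f := by
  obtain ⟨b, hb, hb1⟩ := exists_between hρ
  have hbt : b ≠ ⊤ := (hb1.trans ENNReal.one_lt_top).ne
  refine ⟨b.toReal, ENNReal.toReal_nonneg,
    ENNReal.toReal_one ▸ (ENNReal.toReal_lt_toReal hbt ENNReal.one_ne_top).2 hb1, ?_⟩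
  filter_upwards [eventually_lt_of_limsup_lt hb, eventually_gt_atTop 1] with r hr hr1 z hz
  have hlog : 0 < Real.log r := Real.log_pos hr1
  have hratio : logPlus (logPlus (logPlus (maxMod f r))) / Real.log r ≤ b.toReal :=
    (ENNReal.ofReal_le_iff_le_toReal hbt).1 hr.le
  have hM : maxMod f r ≤ Real.exp (Real.exp (Real.exp (b.toReal * Real.log r))) :=
    le_exp_of_logPlus_le (le_exp_of_logPlus_le (le_exp_of_logPlus_le ((div_le_iff₀ hlog).1 hratio)))
  rw [mul_comm, ← Real.rpow_def_of_pos (by linarith)] at hM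
  exact (norm_le_maxMod hf (by linarith) hz).trans hM

theorem eventually_rpow_add_le {β ρ : ℝ} (hβ : 0 ≤ β) (hβρ : β < ρ) (c : ℝ) :
    ∀ᶠ r : ℝ in atTop, r ^ β + c ≤ r ^ ρ := by
  filter_upwards [(tendsto_rpow_atTop (sub_pos.2 hβρ)).eventually_ge_atTop (1 + |c|),
    eventually_ge_atTop 1] with r hr hr1
  have hsplit : r ^ ρ = r ^ β * r ^ (ρ - β) := by
    rw [← Real.rpow_add (by linarith), add_sub_cancel]
  have hone : 1 ≤ r ^ β := Real.one_le_rpow hr1 hβ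
  rw [hsplit]
  nlinarith [le_abs_self c, abs_nonneg c]

theorem exp_exp_add_le_exp_exp_add {x c : ℝ} (hx : 0 ≤ x) (hc : 0 ≤ c) :
    Real.exp (Real.exp x) + c ≤ Real.exp (Real.exp (x + c)) := by
  have hinner : Real.exp x + c ≤ Real.exp (x + c) := by
    rw [Real.exp_add]
    nlinarith [Real.one_le_exp hx, Real.add_one_le_exp c]
  calc Real.exp (Real.exp x) + c ≤ Real.exp (Real.exp x + c) := by
        rw [Real.exp_add (Real.exp x)]
        nlinarith [Real.one_le_exp (Real.exp_pos x).le, Real.add_one_le_exp c]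
    _ ≤ Real.exp (Real.exp (x + c)) := Real.exp_le_exp.2 hinner

theorem DoubleExpGrowth.sub_const {F : ℂ → ℂ} {β ρ : ℝ} (hF : DoubleExpGrowth β F) (hβ : 0 ≤ β)
    (hβρ : β < ρ) (a : ℂ) : DoubleExpGrowth ρ (fun z => F z - a) := by
  filter_upwards [hF, eventually_rpow_add_le hβ hβρ ‖a‖, eventually_ge_atTop 0]
    with r hFr hgap hr z hz
  calc ‖F z - a‖ ≤ ‖F z‖ + ‖a‖ := norm_sub_le _ _
    _ ≤ Real.exp (Real.exp (r ^ β)) + ‖a‖ := by gcongr; exact hFr z hz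
    _ ≤ Real.exp (Real.exp (r ^ β + ‖a‖)) :=
      exp_exp_add_le_exp_exp_add (Real.rpow_nonneg hr _) (norm_nonneg a)
    _ ≤ Real.exp (Real.exp (r ^ ρ)) := by gcongr

end DoubleExponentialGrowth

/-! ### Rescaling to the model equation -/

section Rescaling

open Metric Set

variable {F h : ℂ → ℂ} {k : ℕ} {a z₀ : ℂ} {δ : ℝ}

theorem isModelSolution_rescale (hF : Differentiable ℂ F) (ha : a ≠ 0)
    (hode : ∀ z, iteratedDeriv k F z = Complex.exp (h z) * F z + a) {L : ℂ} (hL : L ≠ 0) (p : ℂ)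
    (R : ℝ) : IsModelSolution k R (fun s => L ^ k / a * F (p + s / L))
      (fun s => h (p + s / L) - k * Complex.log L) where
  differentiable := by fun_prop
  iteratedDeriv_eq s _ := by
    have hshift : ContDiff ℂ k fun w => F (p + w) := (hF.comp (by fun_prop)).contDiff
    simp only [div_eq_inv_mul _ L]
    rw [iteratedDeriv_const_mul_field, iteratedDeriv_comp_const_mul hshift,
      iteratedDeriv_comp_const_add]
    beta_reduce
    rw [hode, Complex.exp_sub, Complex.exp_nat_mul, Complex.exp_log hL]
    field_simp
    rw [← mul_pow, mul_one_div_cancel hL, one_pow, one_mul]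

theorem IsAlmostAffineDisc.lipschitzOnWith_rescale (hdisc : IsAlmostAffineDisc h z₀ δ)
    (hh : Differentiable ℂ h) (hL : deriv h z₀ ≠ 0) (u c : ℂ) {T : ℝ} {K : NNReal}
    (hT : ‖u‖ + T < ‖deriv h z₀‖ * δ) (hK : ‖u‖ + T ≤ 10 * (‖deriv h z₀‖ * δ) * K) :
    LipschitzOnWith K (fun s => h (z₀ + u / deriv h z₀ + s / deriv h z₀) - c - s)
      (closedBall 0 T) := by
  set L := deriv h z₀
  have hL₀ : 0 < ‖L‖ := norm_pos_iff.2 hL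
  have hδ := hdisc.radius_pos
  refine (convex_closedBall (0 : ℂ) T).lipschitzOnWith_of_nnnorm_hasDerivWithin_le
    (f' := fun s => deriv h (z₀ + u / L + s / L) * (1 / L) - 1) (fun s _ => ?_) fun s hs => ?_
  · have hinner : HasDerivAt (fun s : ℂ => z₀ + u / L + s / L) (1 / L) s :=
      ((hasDerivAt_id s).div_const L).const_add _
    exact ((((hh _).hasDerivAt.comp s hinner).sub_const c).sub (hasDerivAt_id s)).hasDerivWithinAt
  · rw [mem_closedBall_zero_iff] at hs
    have hdist : ‖L‖ * dist (z₀ + u / L + s / L) z₀ ≤ ‖u‖ + T := by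
      rw [dist_eq_norm, add_assoc, add_sub_cancel_left, ← add_div, norm_div,
        mul_div_cancel₀ _ hL₀.ne']
      exact (norm_add_le _ _).trans (by gcongr)
    have hderiv : ‖deriv h (z₀ + u / L + s / L) - L‖ ≤ ‖L‖ * _ :=
      hdisc.norm_deriv_sub_le (z₀ + u / L + s / L)
        (mem_ball.2 (lt_of_mul_lt_mul_left (hdist.trans_lt hT) hL₀.le))
    rw [← NNReal.coe_le_coe, coe_nnnorm]
    calc ‖deriv h (z₀ + u / L + s / L) * (1 / L) - 1‖
        = ‖deriv h (z₀ + u / L + s / L) - L‖ / ‖L‖ := by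
          rw [← norm_div, sub_div, div_self hL, mul_one_div]
      _ ≤ ‖L‖ * dist (z₀ + u / L + s / L) z₀ / (10 * (‖L‖ * δ)) := by
          rw [div_le_iff₀ hL₀]
          refine hderiv.trans_eq ?_
          field_simp
      _ ≤ K := by
          rw [div_le_iff₀ (by positivity)]
          linarith

theorem IsAlmostAffineDisc.lipschitzOnWith_rescale_center (hdisc : IsAlmostAffineDisc h z₀ δ)
    (hh : Differentiable ℂ h) (hL : deriv h z₀ ≠ 0) {T : ℝ} (hT : T < ‖deriv h z₀‖ * δ) :
    LipschitzOnWith (1 / 10) (fun s => h (z₀ + s / deriv h z₀) - s) (closedBall 0 T) := by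
  simpa using hdisc.lipschitzOnWith_rescale hh hL 0 0 (by simpa using hT)
    (by push_cast; simp only [norm_zero, zero_add]; linarith)

end Rescaling

/-! ### The case of an affine exponent -/

section Affine

open Metric Set

variable {F : ℂ → ℂ} {k : ℕ} {a : ℂ} {ρ : ℝ}

theorem eventually_mul_rpow_le {ρ σ : ℝ} (hρσ : ρ < σ) {b : ℝ} (hb : 0 ≤ b) {c : ℝ}
    (hc : 0 < c) : ∀ᶠ r : ℝ in atTop, (b * r) ^ ρ ≤ c * r ^ σ := by
  filter_upwards [((tendsto_rpow_atTop (sub_pos.2 hρσ)).const_mul_atTop hc).eventually_ge_atTop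
    (b ^ ρ), eventually_gt_atTop 0] with r hr hr₀
  calc (b * r) ^ ρ = b ^ ρ * r ^ ρ := Real.mul_rpow hb hr₀.le
    _ ≤ c * r ^ (σ - ρ) * r ^ ρ := by gcongr
    _ = c * r ^ σ := by rw [mul_assoc, ← Real.rpow_add hr₀, sub_add_cancel]

theorem eventually_add_exp_rpow_le_exp (hρ₀ : 0 ≤ ρ) (hρ : ρ < 1) (A : ℝ) {b m : ℝ} (hb : 0 ≤ b)
    (hm : 0 ≤ m) {c : ℝ} (hc : 0 < c) :
    ∀ᶠ M : ℝ in atTop, A + Real.exp ((b + m * M) ^ ρ) ≤ Real.exp (c * M) := by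
  filter_upwards [eventually_mul_rpow_le hρ (b := b + m) (by positivity) (half_pos hc),
    eventually_const_mul_pow_le_exp (|A| + 1) 0 (half_pos hc), eventually_ge_atTop 1]
    with M hpow hconst hM
  rw [Real.rpow_one] at hpow
  rw [pow_zero, mul_one] at hconst
  have hexp : Real.exp ((b + m * M) ^ ρ) ≤ Real.exp (c / 2 * M) := by
    refine Real.exp_le_exp.2 (le_trans ?_ hpow)
    gcongr
    nlinarith
  have hone : 1 ≤ Real.exp (c / 2 * M) := Real.one_le_exp (by positivity)
  calc A + Real.exp ((b + m * M) ^ ρ) ≤ |A| * Real.exp (c / 2 * M) + Real.exp (c / 2 * M) := by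
        gcongr
        nlinarith [le_abs_self A, abs_nonneg A]
    _ = (|A| + 1) * Real.exp (c / 2 * M) := by ring
    _ ≤ Real.exp (c / 2 * M) * Real.exp (c / 2 * M) := by gcongr
    _ = Real.exp (c * M) := by rw [← Real.exp_add]; ring_nf

theorem DoubleExpGrowth.exists_forall_norm_le (hF : DoubleExpGrowth ρ F) :
    ∃ b ≥ 0, ∀ z, ‖F z‖ ≤ Real.exp (Real.exp ((b + ‖z‖) ^ ρ)) := by
  obtain ⟨b, hb⟩ := eventually_atTop.1 hF
  refine ⟨max b 0, le_max_right _ _, fun z => hb _ ?_ z ?_⟩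
  · linarith [le_max_left b 0, norm_nonneg z]
  · rw [mem_closedBall_zero_iff]
    linarith [le_max_right b 0]

theorem DoubleExpGrowth.exists_norm_rescale_le (hF : DoubleExpGrowth ρ F) (hρ₀ : 0 ≤ ρ) {α : ℂ}
    (hα : α ≠ 0) (ha : a ≠ 0) (p : ℂ) :
    ∃ A, ∃ b ≥ 0, ∀ s : ℂ, ‖α ^ k / a * F (p + s / α)‖
      ≤ Real.exp (A + Real.exp ((b + ‖α‖⁻¹ * ‖s‖) ^ ρ)) := by
  obtain ⟨b, hb, hFb⟩ := hF.exists_forall_norm_le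
  have hD : 0 < ‖α ^ k / a‖ := norm_pos_iff.2 (div_ne_zero (pow_ne_zero k hα) ha)
  refine ⟨Real.log ‖α ^ k / a‖, b + ‖p‖, by positivity, fun s => ?_⟩
  have harg : b + ‖p + s / α‖ ≤ b + ‖p‖ + ‖α‖⁻¹ * ‖s‖ := by
    rw [← norm_inv, ← norm_mul, ← div_eq_inv_mul, add_assoc]
    gcongr
    exact norm_add_le _ _
  rw [norm_mul, Real.exp_add, Real.exp_log hD]
  gcongr
  refine (hFb _).trans ?_
  gcongr

theorem not_doubleExpGrowth_of_iteratedDeriv_eq_exp_affine (hk : k ≠ 0) (hF : Differentiable ℂ F)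
    {α β : ℂ} (ha : a ≠ 0) (hα : α ≠ 0)
    (hode : ∀ z, iteratedDeriv k F z = Complex.exp (α * z + β) * F z + a) (hρ₀ : 0 ≤ ρ)
    (hρ : ρ < 1) : ¬ DoubleExpGrowth ρ F := by
  intro hgrowth
  set p : ℂ := (k * Complex.log α - β) / α with hp
  have hid : ∀ s : ℂ, α * (p + s / α) + β - k * Complex.log α = s := fun s => by
    rw [hp]
    field_simp
    ring
  obtain ⟨A, b, hb, hbound⟩ := hgrowth.exists_norm_rescale_le (k := k) hρ₀ hα ha p
  obtain ⟨M, -, ε, hε, hlarge⟩ := exists_forall_isModelSolution_exists_lt_norm hk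
    (Λ := fun x => A + Real.exp ((b + ‖α‖⁻¹ * max x 0) ^ ρ)) (fun x y hxy => by dsimp only; gcongr)
    (by
      filter_upwards [eventually_add_exp_rpow_le_exp hρ₀ hρ A hb (m := ‖α‖⁻¹ * 20) (by positivity)
        (c := 1 / (4 * k)) (by positivity), eventually_ge_atTop 0] with M hM hM₀
      rwa [max_eq_left (by positivity), ← mul_assoc])
  obtain ⟨s, -, hs⟩ := hlarge _ _ 0 (isModelSolution_rescale hF ha hode hα p (20 * M))
    fun s _ => by simpa [hid] using hε.le
  rw [max_eq_left (norm_nonneg s)] at hs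
  exact hs.not_ge (hbound s)

theorem not_doubleExpGrowth_of_forall_deriv_eq {h : ℂ → ℂ} (hk : k ≠ 0) (hF : Differentiable ℂ F)
    (hh : Differentiable ℂ h) (ha : a ≠ 0)
    (hode : ∀ z, iteratedDeriv k F z = Complex.exp (h z) * F z + a)
    (hconst : ∀ w, deriv h w = deriv h 0) (hne : deriv h 0 ≠ 0) (hρ₀ : 0 ≤ ρ) (hρ : ρ < 1) :
    ¬ DoubleExpGrowth ρ F := by
  have haffine : ∀ z, h z = deriv h 0 * z + h 0 := fun z => by
    have hderiv : ∀ w, HasDerivAt (fun w => h w - deriv h 0 * w) 0 w := fun w => by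
      have := (hh w).hasDerivAt.sub ((hasDerivAt_id w).const_mul (deriv h 0))
      rwa [hconst w, mul_one, sub_self] at this
    have := is_const_of_deriv_eq_zero (fun w => (hderiv w).differentiableAt)
      (fun w => (hderiv w).deriv) z 0
    rw [mul_zero, sub_zero] at this
    linear_combination this
  exact not_doubleExpGrowth_of_iteratedDeriv_eq_exp_affine hk hF ha hne
    (fun z => haffine z ▸ hode z) hρ₀ hρ

end Affine

/-! ### The case of a non-affine exponent -/

section NonAffine

open Metric Set

variable {F h : ℂ → ℂ} {k : ℕ} {a z₀ : ℂ} {δ ρ : ℝ}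

theorem IsAlmostAffineDisc.exists_re_add_div_eq (hdisc : IsAlmostAffineDisc h z₀ δ)
    (hh : Differentiable ℂ h) (hL : deriv h z₀ ≠ 0) {c : ℝ} (hc : 0 ≤ c)
    (hcR : 2 * c < ‖deriv h z₀‖ * δ) :
    ∃ x ∈ Icc 0 (2 * c), (h (z₀ + (x : ℂ) / deriv h z₀)).re = c := by
  have hcenter : (h (z₀ + 0 / deriv h z₀)).re = 0 := by simpa using hdisc.re_center
  have := exists_re_add_ofReal_eq (p := 0) (D := 2 * c) (c := c)
    (hdisc.lipschitzOnWith_rescale_center hh hL hcR) (by positivity)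
    (fun x hx => by
      rw [zero_add, mem_closedBall_zero_iff, Complex.norm_real, Real.norm_of_nonneg hx.1]
      exact hx.2)
    (hcenter.trans_le hc) (by linarith)
  simpa only [zero_add] using this

theorem eventually_mul_log_add_le (C D : ℝ) {c : ℝ} (hc : 0 < c) :
    ∀ᶠ x : ℝ in atTop, C * Real.log x + D ≤ c * x := by
  have hlog : (fun x => C * Real.log x + D) =o[atTop] (fun x : ℝ => x) :=
    (Real.isLittleO_log_id_atTop.const_mul_left C).add
      (Asymptotics.isLittleO_const_id_atTop D)
  filter_upwards [hlog.bound hc, eventually_ge_atTop 0] with x hx hx₀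
  rw [Real.norm_of_nonneg hx₀] at hx
  exact (le_abs_self _).trans hx

theorem eventually_const_mul_pow_mul_exp_exp_le (A : ℝ) (n : ℕ) {κ : ℝ} (hκ : 0 < κ) :
    ∀ᶠ x : ℝ in atTop,
      A * x ^ n * Real.exp (Real.exp (κ * √x)) ≤ Real.exp (Real.exp (2 * κ * √x)) := by
  filter_upwards [eventually_const_mul_pow_le_exp A n one_pos, eventually_ge_atTop 2,
    Real.tendsto_sqrt_atTop.eventually (eventually_const_mul_pow_le_exp 1 2 hκ)] with x hA hx hu
  rw [Real.sq_sqrt (by linarith), one_mul] at hu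
  set u := Real.exp (κ * √x) with hu_def
  calc A * x ^ n * Real.exp u ≤ Real.exp u * Real.exp u := by
        gcongr
        exact hA.trans (by rwa [one_mul, Real.exp_le_exp])
    _ = Real.exp (2 * u) := by rw [← Real.exp_add, two_mul]
    _ ≤ Real.exp (u * u) := by
        gcongr
        exact hx.trans hu
    _ = Real.exp (Real.exp (2 * κ * √x)) := by
        rw [hu_def, ← Real.exp_add]
        ring_nf

theorem add_div_add_div_mem_closedBall {L u s : ℂ} (hL : L ≠ 0) (hus : ‖u‖ + ‖s‖ ≤ ‖L‖ * δ) :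
    z₀ + u / L + s / L ∈ closedBall z₀ δ := by
  rw [mem_closedBall, dist_eq_norm, add_assoc, add_sub_cancel_left, ← add_div, norm_div,
    div_le_iff₀' (norm_pos_iff.2 hL)]
  exact (norm_add_le u s).trans hus

theorem IsAlmostAffineDisc.norm_rescale_sub_le (hdisc : IsAlmostAffineDisc h z₀ δ)
    (hh : Differentiable ℂ h) (hL : deriv h z₀ ≠ 0) {u c : ℂ} {M γ : ℝ} (hγ : 0 ≤ γ) (hγ₁ : γ < 1)
    (huM : ‖u‖ + M ≤ γ * (‖deriv h z₀‖ * δ))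
    (hre : (h (z₀ + u / deriv h z₀ + 0 / deriv h z₀) - c).re = 0) {s : ℂ}
    (hs : s ∈ closedBall 0 M) :
    ‖h (z₀ + u / deriv h z₀ + s / deriv h z₀) - c - s
      - (h (z₀ + u / deriv h z₀ + 0 / deriv h z₀) - c).im * Complex.I‖ ≤ γ * M / 10 := by
  have hMnn : 0 ≤ M := (norm_nonneg s).trans (mem_closedBall_zero_iff.1 hs)
  have hRpos : 0 < ‖deriv h z₀‖ * δ := mul_pos (norm_pos_iff.2 hL) hdisc.radius_pos
  have hlip := hdisc.lipschitzOnWith_rescale hh hL u c (T := M) (K := .mk (γ / 10) (by positivity))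
    (huM.trans_lt (mul_lt_of_lt_one_left hRpos hγ₁))
    (huM.trans_eq (by rw [NNReal.coe_mk]; ring))
  have hdist := hlip.dist_le_mul s hs 0 (mem_closedBall_self hMnn)
  set η : ℂ → ℂ := fun s => h (z₀ + u / deriv h z₀ + s / deriv h z₀) - c
  have hη₀ : (η 0).im * Complex.I = η 0 := Complex.ext (by simpa [η] using hre.symm) (by simp)
  rw [mem_closedBall_zero_iff] at hs
  calc ‖η s - s - (η 0).im * Complex.I‖ = dist (η s - s) (η 0 - 0) := by
        rw [hη₀, dist_eq_norm, sub_zero]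
    _ ≤ γ / 10 * dist s 0 := hdist
    _ ≤ γ / 10 * M := by rw [dist_zero_right]; gcongr
    _ = γ * M / 10 := by ring

theorem norm_rescale_le_exp_exp {κ R : ℝ} {L u s : ℂ} (hR : 0 ≤ R) (hL : L ≠ 0)
    (hLR : ‖L‖ ≤ R ^ 3) (hus : ‖u‖ + ‖s‖ ≤ ‖L‖ * δ)
    (hF : ∀ z ∈ closedBall z₀ δ, ‖F z‖ ≤ Real.exp (Real.exp (κ * √R)))
    (hgrowth : 1 / ‖a‖ * R ^ (3 * k) * Real.exp (Real.exp (κ * √R))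
      ≤ Real.exp (Real.exp (2 * κ * √R))) :
    ‖L ^ k / a * F (z₀ + u / L + s / L)‖ ≤ Real.exp (Real.exp (4 * κ * √(R / 4))) := by
  calc ‖L ^ k / a * F (z₀ + u / L + s / L)‖
      ≤ 1 / ‖a‖ * R ^ (3 * k) * Real.exp (Real.exp (κ * √R)) := by
        have := hF _ (add_div_add_div_mem_closedBall hL hus)
        rw [norm_mul, norm_div, norm_pow, pow_mul, one_div_mul_eq_div]
        gcongr
    _ ≤ Real.exp (Real.exp (2 * κ * √R)) := hgrowth
    _ = Real.exp (Real.exp (4 * κ * √(R / 4))) := by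
        rw [Real.sqrt_div hR, show (4 : ℝ) = 2 ^ 2 by norm_num, Real.sqrt_sq zero_le_two]
        ring_nf

theorem exists_forall_isAlmostAffineDisc_exists_lt_norm (hk : k ≠ 0) (ha : a ≠ 0) :
    ∃ κ > 0, ∃ R₀, ∀ (F h : ℂ → ℂ) (z₀ : ℂ) (δ : ℝ), Differentiable ℂ F → Differentiable ℂ h →
      (∀ z, iteratedDeriv k F z = Complex.exp (h z) * F z + a) → IsAlmostAffineDisc h z₀ δ →
      1 ≤ ‖deriv h z₀‖ → ‖deriv h z₀‖ ≤ (‖deriv h z₀‖ * δ) ^ 3 → R₀ ≤ ‖deriv h z₀‖ * δ →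
      ∃ z ∈ closedBall z₀ δ, Real.exp (Real.exp (κ * √(‖deriv h z₀‖ * δ))) < ‖F z‖ := by
  obtain ⟨κ, hκ, M, hM, ε, hε, R₁, -, hmodel⟩ := exists_forall_not_isModelSolution hk
  set γ : ℝ := min (1 / 4) (10 * ε / M)
  have hγ : 0 < γ := lt_min (by norm_num) (by positivity)
  have hγ₄ : γ ≤ 1 / 4 := min_le_left _ _
  have hγM : γ * M / 10 ≤ ε := by
    have : γ * M ≤ 10 * ε := (le_div_iff₀ hM).1 (min_le_right _ _)
    linarith
  obtain ⟨R₀, hR₀⟩ := eventually_atTop.1 <| ((eventually_mul_log_add_le (6 * k) M hγ).and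
    (eventually_const_mul_pow_mul_exp_exp_le (1 / ‖a‖) (3 * k) (κ := κ / 4) (by positivity))).and
    ((eventually_ge_atTop (4 * R₁)).and (eventually_gt_atTop 0))
  refine ⟨κ / 4, by positivity, R₀, fun F h z₀ δ hF hh hode hdisc hL₁ hLR hR => ?_⟩
  by_contra! hle
  set L := deriv h z₀
  set R := ‖L‖ * δ
  obtain ⟨⟨hlog, hgrowth⟩, hR₁, hR_pos⟩ := hR₀ R hR
  have hL : L ≠ 0 := norm_pos_iff.1 (by linarith)
  have hlogL : k * Real.log ‖L‖ ≤ 3 * k * Real.log R := by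
    have := Real.log_le_log (by linarith) hLR
    rw [Real.log_pow] at this
    push_cast at this
    nlinarith [k.cast_nonneg (α := ℝ)]
  obtain ⟨x, ⟨hx₀, hxR⟩, hx⟩ : ∃ x ∈ Icc 0 (2 * (k * Real.log ‖L‖)),
      (h (z₀ + (x : ℂ) / L)).re = k * Real.log ‖L‖ :=
    hdisc.exists_re_add_div_eq hh hL (by have := Real.log_nonneg hL₁; positivity) (by nlinarith)
  have hnorm_x : ‖(x : ℂ)‖ = x := by rw [Complex.norm_real, Real.norm_of_nonneg hx₀]
  have hxM : ‖(x : ℂ)‖ + M ≤ γ * R := by linarith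
  have hx₄ : ‖(x : ℂ)‖ ≤ R / 4 := by nlinarith
  have hre : (h (z₀ + x / L + 0 / L) - k * Complex.log L).re = 0 := by
    simp [hx, Complex.log_re]
  refine hmodel _ _ (R / 4) (by linarith) (hdisc.lipschitzOnWith_rescale hh hL x _ (by linarith)
    (by push_cast; linarith)) hre (fun s hs => ?_) (fun s hs => ?_)
    (isModelSolution_rescale hF ha hode hL (z₀ + x / L) (R / 4))
  · exact (hdisc.norm_rescale_sub_le hh hL hγ.le (by linarith) hxM hre hs).trans hγM
  · rw [mem_closedBall_zero_iff] at hs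
    refine (norm_rescale_le_exp_exp hR_pos.le hL hLR
      (show ‖(x : ℂ)‖ + ‖s‖ ≤ R by linarith) hle hgrowth).trans_eq ?_
    rw [mul_div_cancel₀ κ four_ne_zero]

theorem rpow_le_of_rpow_one_add_le {r σ C l : ℝ} (hr : 0 < r) (hC : 0 ≤ C) (hl : 0 ≤ l)
    (hδ : 0 ≤ δ) (hδr : δ ≤ 4 * r) (h : r ^ (1 + σ) ≤ C * (l * δ ^ 2)) :
    r ^ σ ≤ 4 * C * (l * δ) := by
  rw [Real.rpow_add hr, Real.rpow_one] at h
  refine le_of_mul_le_mul_left (h.trans ?_) hr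
  calc C * (l * δ ^ 2) = C * (l * δ) * δ := by ring
    _ ≤ C * (l * δ) * (4 * r) := by gcongr
    _ = r * (4 * C * (l * δ)) := by ring

theorem rpow_sub_one_le_of_rpow_one_add_le {r σ C l : ℝ} (hr : 0 < r) (hC : 0 ≤ C) (hl : 0 ≤ l)
    (hδ : 0 ≤ δ) (hδr : δ ≤ 4 * r) (h : r ^ (1 + σ) ≤ C * (l * δ ^ 2)) :
    r ^ (σ - 1) ≤ 16 * C * l := by
  rw [Real.rpow_sub_one hr.ne', div_le_iff₀ hr]
  calc r ^ σ ≤ 4 * C * (l * δ) := rpow_le_of_rpow_one_add_le hr hC hl hδ hδr h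
    _ ≤ 4 * C * (l * (4 * r)) := by gcongr
    _ = 16 * C * l * r := by ring

theorem eventually_rpow_le_mul_sqrt (hρ : ρ < 1) {b κ C : ℝ} (hb : 0 ≤ b) (hκ : 0 < κ)
    (hC : 0 < C) : ∀ᶠ r : ℝ in atTop, ∀ R, r ^ (1 + ρ) ≤ C * R → (b * r) ^ ρ ≤ κ * √R := by
  filter_upwards [eventually_mul_rpow_le (show ρ < (1 + ρ) / 2 by linarith) hb
    (div_pos hκ (Real.sqrt_pos.2 hC)), eventually_ge_atTop 0] with r hr hr₀ R hR
  calc (b * r) ^ ρ ≤ κ / √C * r ^ ((1 + ρ) / 2) := hr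
    _ = κ / √C * √(r ^ (1 + ρ)) := by rw [Real.sqrt_eq_rpow (r ^ _), ← Real.rpow_mul hr₀]; ring_nf
    _ ≤ κ / √C * √(C * R) := by gcongr
    _ = κ * √R := by
      have := (Real.sqrt_pos.2 hC).ne'
      rw [Real.sqrt_mul hC.le]
      field_simp

theorem frequently_exists_isAlmostAffineDisc_of_deriv_ne (hh : Differentiable ℂ h) {w₀ : ℂ}
    (hw₀ : deriv h w₀ ≠ deriv h 0) (hρ₀ : 0 < ρ) (hρ : ρ < 1) : ∃ C > 0, ∀ R₀, ∃ᶠ r : ℝ in atTop,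
      ∃ z₀ δ, IsAlmostAffineDisc h z₀ δ ∧ ‖z₀‖ + δ ≤ 4 * r ∧ 1 ≤ ‖deriv h z₀‖ ∧
        ‖deriv h z₀‖ ≤ (‖deriv h z₀‖ * δ) ^ 3 ∧ R₀ ≤ ‖deriv h z₀‖ * δ ∧
        r ^ (1 + ρ) ≤ C * (‖deriv h z₀‖ * δ) := by
  obtain ⟨w₁, hw₁⟩ : ∃ w₁, deriv h w₁ ≠ 0 := by
    by_contra! hzero
    exact hw₀ ((hzero w₀).trans (hzero 0).symm)
  obtain ⟨C, hC, hdiscs⟩ := frequently_exists_isAlmostAffineDisc hh hw₁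
    (frequently_rpow_le_re_of_deriv_ne hh hw₀ (σ := 1 + ρ) (by linarith))
  refine ⟨4 * C, by positivity, fun R₀ => (hdiscs.and_eventually
    (((tendsto_rpow_atTop (show 0 < 1 + ρ by linarith)).eventually_ge_atTop
      (4 * C * max R₀ C)).and (((tendsto_rpow_atTop hρ₀).eventually_ge_atTop (16 * C)).and
      (eventually_ge_atTop 1)))).mono ?_⟩
  rintro r ⟨⟨z₀, δ, hdisc, hz₀, hr⟩, hRr, hlr, hr₁⟩
  have hδr : δ ≤ 4 * r := by linarith [norm_nonneg z₀]
  have hδ := hdisc.radius_pos.le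
  have hR := rpow_le_of_rpow_one_add_le (by linarith) hC.le (norm_nonneg _) hδ hδr hr
  have hRmax : max R₀ C ≤ ‖deriv h z₀‖ * δ :=
    le_of_mul_le_mul_left (hRr.trans hR) (by positivity)
  refine ⟨z₀, δ, hdisc, hz₀, ?_, ?_, (le_max_left _ _).trans hRmax, hR⟩
  · have := rpow_sub_one_le_of_rpow_one_add_le (by linarith) hC.le (norm_nonneg _) hδ hδr hr
    rw [add_sub_cancel_left] at this
    exact le_of_mul_le_mul_left (by linarith) (show 0 < 16 * C by positivity)
  · have hone : 1 ≤ C * (‖deriv h z₀‖ * δ ^ 2) :=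
      (Real.one_le_rpow hr₁ (by linarith)).trans hr
    calc ‖deriv h z₀‖ ≤ ‖deriv h z₀‖ * (C * (‖deriv h z₀‖ * δ ^ 2)) :=
          le_mul_of_one_le_right (norm_nonneg _) hone
      _ = C * (‖deriv h z₀‖ * δ) ^ 2 := by ring
      _ ≤ (‖deriv h z₀‖ * δ) * (‖deriv h z₀‖ * δ) ^ 2 := by
          gcongr
          exact (le_max_right _ _).trans hRmax
      _ = (‖deriv h z₀‖ * δ) ^ 3 := by ring

theorem not_doubleExpGrowth_of_deriv_ne (hk : k ≠ 0) (hF : Differentiable ℂ F)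
    (hh : Differentiable ℂ h) (ha : a ≠ 0)
    (hode : ∀ z, iteratedDeriv k F z = Complex.exp (h z) * F z + a) {w₀ : ℂ}
    (hw₀ : deriv h w₀ ≠ deriv h 0) (hρ₀ : 0 < ρ) (hρ : ρ < 1) : ¬ DoubleExpGrowth ρ F := by
  intro hgrowth
  obtain ⟨κ, hκ, R₀, hlarge⟩ := exists_forall_isAlmostAffineDisc_exists_lt_norm hk ha
  obtain ⟨C, hC, hdiscs⟩ := frequently_exists_isAlmostAffineDisc_of_deriv_ne hh hw₀ hρ₀ hρ
  obtain ⟨r, ⟨z₀, δ, hdisc, hz₀, hl, hlR, hR₀, hrR⟩, hbound, hκr⟩ :=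
    ((hdiscs R₀).and_eventually
      (((tendsto_id.const_mul_atTop (show (0 : ℝ) < 4 by norm_num)).eventually hgrowth).and
        (eventually_rpow_le_mul_sqrt hρ zero_le_four hκ hC))).exists
  obtain ⟨z, hz, hFz⟩ := hlarge F h z₀ δ hF hh hode hdisc hl hlR hR₀
  have hz_mem : z ∈ closedBall 0 (4 * r) :=
    closedBall_subset_closedBall' (by rwa [dist_zero_right, add_comm]) hz
  refine hFz.not_ge ((hbound z hz_mem).trans ?_)
  gcongr
  exact hκr _ hrR

end NonAffine

/-! ### The homogeneous equation -/

section Homogeneous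

open Metric Set

variable {F h : ℂ → ℂ} {k : ℕ} {p z₀ : ℂ} {r R B C δ ρ : ℝ}

theorem IsAlmostAffineDisc.exists_forall_div_four_le_re (hdisc : IsAlmostAffineDisc h z₀ δ)
    (hh : Differentiable ℂ h) (hL : deriv h z₀ ≠ 0) :
    ∃ p, dist p z₀ ≤ δ / 2 ∧
      ∀ z ∈ closedBall p (δ / 8), ‖deriv h z₀‖ * δ / 4 ≤ (h z).re := by
  set L := deriv h z₀
  set R := ‖L‖ * δ
  have hR : 0 < R := mul_pos (norm_pos_iff.2 hL) hdisc.radius_pos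
  have hpL : L * ((R / 2 : ℝ) / L) = (R / 2 : ℝ) := mul_div_cancel₀ _ hL
  refine ⟨z₀ + (R / 2 : ℝ) / L, ?_, fun z hz => ?_⟩
  · rw [dist_self_add_left, norm_div, Complex.norm_real, Real.norm_of_nonneg (by positivity),
      div_le_iff₀' (norm_pos_iff.2 hL)]
    exact le_of_eq (by ring)
  set s := L * (z - z₀)
  have hzs : z₀ + s / L = z := by rw [mul_div_cancel_left₀ _ hL, add_sub_cancel]
  have hsR : ‖s - (R / 2 : ℝ)‖ ≤ R / 8 := by
    rw [mem_closedBall, dist_eq_norm] at hz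
    calc ‖s - (R / 2 : ℝ)‖ = ‖L‖ * ‖z - (z₀ + (R / 2 : ℝ) / L)‖ := by
          rw [← norm_mul, ← sub_sub, mul_sub, hpL]
      _ ≤ ‖L‖ * (δ / 8) := by gcongr
      _ = R / 8 := by ring
  have hs : ‖s‖ ≤ 5 / 8 * R := by
    have := norm_le_norm_add_norm_sub' s (R / 2 : ℝ)
    rw [Complex.norm_real, Real.norm_of_nonneg (by positivity)] at this
    linarith
  have hre := abs_re_sub_sub_le (p := 0) (z := s)
    (hdisc.lipschitzOnWith_rescale_center hh hL (T := 5 / 8 * R) (show 5 / 8 * R < R by linarith))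
    (mem_closedBall_self (by positivity)) (mem_closedBall_zero_iff.2 hs)
  have hcenter := hdisc.re_center
  rw [zero_div, add_zero, hcenter, sub_zero, sub_zero, dist_zero_right] at hre
  have hre_s := (Complex.abs_re_le_norm _).trans hsR
  rw [Complex.sub_re, Complex.ofReal_re] at hre_s
  rw [← hzs]
  linarith [(abs_le.1 hre).1, (abs_le.1 hre_s).1]

theorem norm_le_exp_sub_of_iteratedDeriv_eq_exp_mul (hF : Differentiable ℂ F) {ϱ c : ℝ}
    (hϱ : 0 < ϱ) (hode : ∀ z ∈ closedBall p (2 * ϱ), iteratedDeriv k F z = Complex.exp (h z) * F z)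
    (hc : ∀ z ∈ closedBall p (2 * ϱ), c ≤ (h z).re)
    (hB : ∀ z ∈ closedBall p (2 * ϱ), ‖F z‖ ≤ Real.exp B) {N : ℕ}
    (hN : 6 * k.factorial * (N / ϱ) ^ k ≤ Real.exp c) {q : ℂ} (hq : q ∈ closedBall p ϱ) :
    ‖F q‖ ≤ Real.exp (B - N) := by
  have hsub : closedBall q ϱ ⊆ closedBall p (2 * ϱ) :=
    closedBall_subset_closedBall' (by linarith [mem_closedBall.1 hq])
  obtain ⟨q', hq', hgrow⟩ := exists_exp_mul_norm_le_of_iteratedDeriv_eq (p := q) (E := 0)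
    (e := 0) hF hϱ (fun z hz => by simpa using hode z (hsub hz))
    (fun z hz => by
      rw [Complex.norm_exp]
      exact Real.exp_le_exp.2 (hc z (hsub hz)))
    (by simp) hN (by rw [mul_zero]; positivity)
  rw [Real.exp_sub, le_div_iff₀' (Real.exp_pos _)]
  exact hgrow.trans (hB q' (hsub hq'))

theorem norm_le_exp_neg_of_norm_le_exp_sub (hF : Differentiable ℂ F) {r₁ : ℝ} (hr₁ : 0 < r₁)
    (hr₁r : r₁ ≤ r) (hR : 1 ≤ R) (hB : 1 ≤ B) (hrR : r / r₁ ≤ Real.exp R)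
    (hsmall : ∀ z ∈ closedBall p r₁, ‖F z‖ ≤ Real.exp (B - 5 * R * B))
    (hbig : ∀ z ∈ sphere p (3 * r), ‖F z‖ ≤ Real.exp B) {z : ℂ} (hz : z ∈ closedBall p r) :
    ‖F z‖ ≤ Real.exp (-B) := by
  have hr : 0 < r := hr₁.trans_le hr₁r
  set m := ⌈2 * B⌉₊
  have hm : 2 * B ≤ m := Nat.le_ceil _
  have hm' : (m : ℝ) ≤ 3 * B := by linarith [Nat.ceil_lt_add_one (show 0 ≤ 2 * B by linarith)]
  refine (norm_le_max_of_three_circles hr₁ hr₁r (by linarith) hF.diffContOnCl hsmall hbig m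
    hz).trans (max_le ?_ ?_)
  · calc Real.exp (B - 5 * R * B) * (r / r₁) ^ m
        ≤ Real.exp (B - 5 * R * B) * Real.exp R ^ m := by gcongr
      _ = Real.exp (B - 5 * R * B + m * R) := by rw [← Real.exp_nat_mul, ← Real.exp_add]
      _ ≤ Real.exp (-B) := by
        gcongr
        nlinarith
  · have hthird : r / (3 * r) ≤ Real.exp (-1) := by
      rw [Real.exp_neg, div_le_iff₀ (by positivity), inv_mul_eq_div, le_div_iff₀ (Real.exp_pos 1),
        mul_comm]
      gcongr
      exact Real.exp_one_lt_three.le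
    calc Real.exp B * (r / (3 * r)) ^ m ≤ Real.exp B * Real.exp (-1) ^ m := by gcongr
      _ = Real.exp (B + m * -1) := by rw [← Real.exp_nat_mul, ← Real.exp_add]
      _ ≤ Real.exp (-B) := by
        gcongr
        linarith

theorem IsAlmostAffineDisc.norm_le_exp_neg (hdisc : IsAlmostAffineDisc h z₀ δ)
    (hF : Differentiable ℂ F) (hh : Differentiable ℂ h)
    (hode : ∀ z, iteratedDeriv k F z = Complex.exp (h z) * F z) (hz₀ : ‖z₀‖ + δ ≤ 4 * r)
    (hR : 1 ≤ ‖deriv h z₀‖ * δ) (hB : 1 ≤ B)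
    (hbound : ∀ z ∈ closedBall 0 (20 * r), ‖F z‖ ≤ Real.exp B)
    (hN : 6 * k.factorial * (⌈5 * (‖deriv h z₀‖ * δ) * B⌉₊ / (δ / 16)) ^ k
      ≤ Real.exp (‖deriv h z₀‖ * δ / 4))
    (hrR : 5 * r / (δ / 16) ≤ Real.exp (‖deriv h z₀‖ * δ)) {y : ℂ} (hy : y ∈ closedBall 0 r) :
    ‖F y‖ ≤ Real.exp (-B) := by
  have hδ := hdisc.radius_pos
  have hL : deriv h z₀ ≠ 0 := by
    intro hL
    rw [hL, norm_zero, zero_mul] at hR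
    linarith
  obtain ⟨p, hp, hre⟩ := hdisc.exists_forall_div_four_le_re hh hL
  have hpr : ‖p‖ ≤ 4 * r := by
    rw [dist_eq_norm] at hp
    linarith [norm_le_norm_add_norm_sub' p z₀]
  have hball : ∀ {t : ℝ}, t ≤ 16 * r → ∀ z ∈ closedBall p t, ‖F z‖ ≤ Real.exp B :=
    fun ht z hz => hbound z
      (closedBall_subset_closedBall' (by rw [dist_zero_right]; linarith) hz)
  have hδr : δ ≤ 4 * r := by linarith [norm_nonneg z₀]
  have hradius : 2 * (δ / 16) = δ / 8 := by ring
  refine norm_le_exp_neg_of_norm_le_exp_sub hF (r₁ := δ / 16) (r := 5 * r) (by positivity)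
    (by linarith) hR hB hrR (fun q hq => ?_)
    (fun z hz => hball (by linarith) z (sphere_subset_closedBall hz)) ?_
  · refine (norm_le_exp_sub_of_iteratedDeriv_eq_exp_mul hF (by positivity) (fun z _ => hode z)
      (by rwa [hradius]) (hball (by linarith)) hN hq).trans ?_
    gcongr
    exact Nat.le_ceil _
  · exact closedBall_subset_closedBall'
      (by rw [dist_zero_left]; linarith) hy

theorem eventually_factorial_mul_pow_ceil_div_le (hk : k ≠ 0) (hC : 0 < C) :
    ∀ᶠ R : ℝ in atTop, ∀ B δ : ℝ, 1 ≤ B → B ≤ Real.exp (R / (8 * k)) → 0 < δ →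
      1 ≤ C * R * δ → 6 * k.factorial * (⌈5 * R * B⌉₊ / (δ / 16)) ^ k ≤ Real.exp (R / 4) := by
  have hk₀ : (k : ℝ) ≠ 0 := Nat.cast_ne_zero.2 hk
  filter_upwards [eventually_const_mul_pow_le_exp (6 * k.factorial * (96 * C) ^ k) (2 * k)
    (show (0 : ℝ) < 1 / 8 by norm_num), eventually_ge_atTop 1] with R hexp hR B δ hB hBR hδ hCδ
  have hceil : (⌈5 * R * B⌉₊ : ℝ) ≤ 6 * R * B := by
    have := Nat.ceil_lt_add_one (show 0 ≤ 5 * R * B by positivity)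
    nlinarith
  have hbase : ⌈5 * R * B⌉₊ / (δ / 16) ≤ 96 * C * R ^ 2 * Real.exp (R / (8 * k)) := by
    rw [div_le_iff₀ (by positivity)]
    calc (⌈5 * R * B⌉₊ : ℝ) ≤ 6 * R * B * (C * R * δ) :=
          hceil.trans (le_mul_of_one_le_right (by positivity) hCδ)
      _ = 96 * C * R ^ 2 * B * (δ / 16) := by ring
      _ ≤ 96 * C * R ^ 2 * Real.exp (R / (8 * k)) * (δ / 16) := by gcongr
  calc 6 * k.factorial * (⌈5 * R * B⌉₊ / (δ / 16)) ^ k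
      ≤ 6 * k.factorial * (96 * C * R ^ 2 * Real.exp (R / (8 * k))) ^ k := by gcongr
    _ = 6 * k.factorial * (96 * C) ^ k * R ^ (2 * k) * Real.exp (R / 8) := by
        rw [mul_pow, mul_pow, ← Real.exp_nat_mul, ← pow_mul, ← mul_assoc, ← mul_assoc]
        congr 2
        field_simp
    _ ≤ Real.exp (1 / 8 * R) * Real.exp (R / 8) := by gcongr
    _ = Real.exp (R / 4) := by
        rw [← Real.exp_add]
        ring_nf

theorem frequently_exists_isAlmostAffineDisc_of_deriv_ne_zero (hk : k ≠ 0)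
    (hh : Differentiable ℂ h) {w₀ : ℂ} (hw₀ : deriv h w₀ ≠ 0) (hρ₀ : 0 ≤ ρ) (hρ : ρ < 1) :
    ∃ C > 0, ∀ R₀, ∃ᶠ r : ℝ in atTop, ∃ z₀ δ, IsAlmostAffineDisc h z₀ δ ∧ ‖z₀‖ + δ ≤ 4 * r ∧
      R₀ ≤ ‖deriv h z₀‖ * δ ∧ (20 * r) ^ ρ ≤ ‖deriv h z₀‖ * δ / (8 * k) ∧
      r ≤ C * (‖deriv h z₀‖ * δ) * δ := by
  set σ : ℝ := (1 + ρ) / 2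
  have hσ : 0 < σ := by positivity
  have hρσ : ρ < σ := show ρ < (1 + ρ) / 2 by linarith
  obtain ⟨C, hC, hdiscs⟩ := frequently_exists_isAlmostAffineDisc hh hw₀
    (frequently_rpow_le_re_of_deriv_ne_zero hh hw₀ (show (1 + ρ) / 2 < 1 by linarith))
  refine ⟨C, hC, fun R₀ => (hdiscs.and_eventually
    ((eventually_mul_rpow_le hρσ (b := 20) (by norm_num)
      (show 0 < 1 / (4 * C * (8 * k)) by positivity)).and
    (((tendsto_rpow_atTop hσ).eventually_ge_atTop (4 * C * R₀)).and
      (eventually_ge_atTop 1)))).mono ?_⟩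
  rintro r ⟨⟨z₀, δ, hdisc, hz₀, hr⟩, hpow, hR₀, hr₁⟩
  have hR := rpow_le_of_rpow_one_add_le (by linarith) hC.le (norm_nonneg _) hdisc.radius_pos.le
    (by linarith [norm_nonneg z₀]) hr
  refine ⟨z₀, δ, hdisc, hz₀, le_of_mul_le_mul_left (hR₀.trans hR) (by positivity), ?_, ?_⟩
  · calc (20 * r) ^ ρ ≤ 1 / (4 * C * (8 * k)) * r ^ σ := hpow
      _ ≤ 1 / (4 * C * (8 * k)) * (4 * C * (‖deriv h z₀‖ * δ)) := by gcongr
      _ = ‖deriv h z₀‖ * δ / (8 * k) := by field_simp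
  · calc r = r ^ (1 : ℝ) := (Real.rpow_one r).symm
      _ ≤ r ^ (1 + σ) := Real.rpow_le_rpow_of_exponent_le hr₁ (by linarith)
      _ ≤ C * (‖deriv h z₀‖ * δ ^ 2) := hr
      _ = C * (‖deriv h z₀‖ * δ) * δ := by ring

theorem not_doubleExpGrowth_of_iteratedDeriv_eq_exp_mul (hk : k ≠ 0) (hF : Differentiable ℂ F)
    (hh : Differentiable ℂ h) {y : ℂ} (hy : F y ≠ 0)
    (hode : ∀ z, iteratedDeriv k F z = Complex.exp (h z) * F z) {w₀ : ℂ} (hw₀ : deriv h w₀ ≠ 0)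
    (hρ₀ : 0 < ρ) (hρ : ρ < 1) : ¬ DoubleExpGrowth ρ F := by
  intro hgrowth
  obtain ⟨C, hC, hdiscs⟩ :=
    frequently_exists_isAlmostAffineDisc_of_deriv_ne_zero hk hh hw₀ hρ₀.le hρ
  obtain ⟨R₀, hR₀⟩ := eventually_atTop.1 <|
    (eventually_factorial_mul_pow_ceil_div_le hk hC).and <|
    (eventually_const_mul_pow_le_exp (80 * C) 1 one_pos).and (eventually_ge_atTop 1)
  have h20 : Tendsto (fun r : ℝ => 20 * r) atTop atTop :=
    tendsto_id.const_mul_atTop (by norm_num)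
  have hFy : ∀ᶠ r : ℝ in atTop, Real.exp (-Real.exp ((20 * r) ^ ρ)) < ‖F y‖ :=
    (Real.tendsto_exp_neg_atTop_nhds_zero.comp (Real.tendsto_exp_atTop.comp
      ((tendsto_rpow_atTop hρ₀).comp h20))).eventually_lt_const (norm_pos_iff.2 hy)
  obtain ⟨r, ⟨z₀, δ, hdisc, hz₀, hR, hB, hrδ⟩, hbound, hFy, hyr, hr⟩ :=
    ((hdiscs R₀).and_eventually ((h20.eventually hgrowth).and
      (hFy.and ((eventually_ge_atTop ‖y‖).and (eventually_ge_atTop 1))))).exists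
  obtain ⟨hfac, hexp, hR₁⟩ := hR₀ _ hR
  have hδ := hdisc.radius_pos
  have hB₁ : 1 ≤ Real.exp ((20 * r) ^ ρ) := Real.one_le_exp (by positivity)
  refine hFy.not_ge (hdisc.norm_le_exp_neg hF hh hode hz₀ hR₁ hB₁ hbound
    (hfac _ δ hB₁ (Real.exp_le_exp.2 hB) hδ (hr.trans hrδ)) ?_ (mem_closedBall_zero_iff.2 hyr))
  rw [pow_one, one_mul] at hexp
  refine le_trans ?_ hexp
  rw [div_le_iff₀ (by positivity)]
  linarith

end Homogeneous

theorem deriv_eq_zero_of_doubleExpGrowth {F h : ℂ → ℂ} {k : ℕ} {a y : ℂ} {ρ : ℝ} (hk : k ≠ 0)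
    (hF : Differentiable ℂ F) (hh : Differentiable ℂ h) (hy : F y ≠ 0)
    (hode : ∀ z, iteratedDeriv k F z = Complex.exp (h z) * F z + a) (hρ₀ : 0 < ρ) (hρ : ρ < 1)
    (hgrowth : DoubleExpGrowth ρ F) (w : ℂ) : deriv h w = 0 := by
  by_contra hw
  rcases eq_or_ne a 0 with rfl | ha
  · exact not_doubleExpGrowth_of_iteratedDeriv_eq_exp_mul hk hF hh hy
      (fun z => by rw [hode, add_zero]) hw hρ₀ hρ hgrowth
  by_cases haffine : ∀ v, deriv h v = deriv h 0
  · exact not_doubleExpGrowth_of_forall_deriv_eq hk hF hh ha hode haffine (haffine w ▸ hw) hρ₀.le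
      hρ hgrowth
  · obtain ⟨v, hv⟩ := not_forall.1 haffine
    exact not_doubleExpGrowth_of_deriv_ne hk hF hh ha hode hv hρ₀ hρ hgrowth

/-- Theorem 1 (Brück conjecture for hyper-order less than one): if `f` is a nonconstant
entire function with `ρ₂(f) < 1` and `f`, `f⁽ᵏ⁾` share the finite value `a` CM (same zeros
of `f − a` and `f⁽ᵏ⁾ − a` with the same multiplicities), then `f⁽ᵏ⁾ − a = c(f − a)` for a
nonzero constant `c`. -/
theorem stmt_15 (f : ℂ → ℂ) (hf : Differentiable ℂ f)
    (hfnc : ∃ z w : ℂ, f z ≠ f w)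
    (hρ : hyperOrder f < 1)
    (k : ℕ) (hk : 1 ≤ k) (a : ℂ)
    (hshare : ∀ z : ℂ, ∀ n : ℕ,
      (VanishesToOrder (fun w => f w - a) z n ↔
        VanishesToOrder (fun w => iteratedDeriv k f w - a) z n)) :
    ∃ c : ℂ, c ≠ 0 ∧ ∀ z : ℂ, iteratedDeriv k f z - a = c * (f z - a) := by
  have hk₀ : k ≠ 0 := Nat.one_le_iff_ne_zero.1 hk
  obtain ⟨y, hy⟩ : ∃ y, f y - a ≠ 0 := by
    by_contra! hzero
    obtain ⟨z, w, hzw⟩ := hfnc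
    exact hzw (sub_left_injective ((hzero z).trans (hzero w).symm))
  have hF : Differentiable ℂ fun w => f w - a := hf.sub_const a
  have hG : Differentiable ℂ fun w => iteratedDeriv k f w - a := fun z =>
    (hasDerivAt_iteratedDeriv hf k z).differentiableAt.sub_const a
  obtain ⟨h, hh, hexp⟩ := exists_eq_exp_mul_of_vanishesToOrder_iff hF hG hy hshare
  have hode (z : ℂ) : iteratedDeriv k (fun w => f w - a) z
      = Complex.exp (h z) * (f z - a) + a := by
    have hsub : (fun w => f w - a) = fun w => -a + f w := funext fun w => sub_eq_neg_add _ _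
    rw [← hexp, hsub, iteratedDeriv_const_add hk, sub_add_cancel]
  obtain ⟨β, hβ₀, hβ, hgrowth⟩ := exists_doubleExpGrowth_of_hyperOrder_lt_one hf hρ
  have hderiv := deriv_eq_zero_of_doubleExpGrowth hk₀ hF hh hy hode (ρ := (β + 1) / 2)
    (by linarith) (by linarith) (hgrowth.sub_const hβ₀ (by linarith) a)
  refine ⟨Complex.exp (h 0), Complex.exp_ne_zero _, fun z => ?_⟩
  rw [hexp z, is_const_of_deriv_eq_zero hh hderiv z 0]
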